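/- Let R₀ > 0 and let F(x,y) = Σ_{m,n≥0} a_{m,n} x^m y^n be given by a power series converging absolutely on the polydisc {(x,y) ∈ ℂ² : |x| < R₀, |y| < R₀}. Assume F(·,0) and F(0,·) are not identically zero, and let k := min{m : a_{m,0} ≠ 0} and l := min{n : a_{0,n} ≠ 0}. Then for every real c > 0 with c·k < 1 and c·l < 1, there exist R ∈ (0, R₀], δ > 0 and M > 0 such that K_t(R) ≤ M for all t ∈ ℂ with |t| ≤ δ. -/

import Mathlib

open MeasureTheory
open scoped ENNReal

/-- The integral `K_t(R)` of `|F|^{-2c}` over the fiber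
`U_t = {(x,y) : xy = t, |x| < R, |y| < R}` of `π(x,y) = xy`, with respect to the
volume induced by the Euclidean metric.  For `t ≠ 0` it equals
`∫_{|t|/R < |x| < R} (1 + |t|²/|x|⁴)·|F(x,t/x)|^{-2c} dλ(x)`, and for `t = 0` it is
`∫_{0 < |x| < R} |F(x,0)|^{-2c} dλ(x) + ∫_{0 < |y| < R} |F(0,y)|^{-2c} dλ(y)`. -/
noncomputable def fiberIntegral (F : ℂ → ℂ → ℂ) (c R : ℝ) (t : ℂ) : ℝ≥0∞ :=
  if t = 0 then
    (∫⁻ x in {x : ℂ | 0 < ‖x‖ ∧ ‖x‖ < R}, ENNReal.ofReal (‖F x 0‖ ^ (-(2 * c)))) +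
      (∫⁻ y in {y : ℂ | 0 < ‖y‖ ∧ ‖y‖ < R}, ENNReal.ofReal (‖F 0 y‖ ^ (-(2 * c))))
  else
    ∫⁻ x in {x : ℂ | ‖t‖ / R < ‖x‖ ∧ ‖x‖ < R},
      ENNReal.ofReal ((1 + ‖t‖ ^ 2 / ‖x‖ ^ 4) * ‖F x (t / x)‖ ^ (-(2 * c)))

/-!
Let `ℂˣ` act by `(x, y) ↦ (λ x, λ⁻¹ y)`, preserving the fibers of `x y`. Along an orbit
`(x eʷ, y e⁻ʷ)` the series is, up to a relatively small error, the exponential sum `∑ Wⱼ eʲʷ` over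
the weights `-l ≤ j ≤ k`, where `Wⱼ` is the part of `F` of weight `j`. Each `Wⱼ` is a monomial times
a power series in `t = x y`, so near the origin one of any two consecutive `Wⱼ` is negligible
against the other, and at most `(k + l) / 2 + 1` of them are comparable to `Λ = ∑ ‖Wⱼ‖`. By a
Vandermonde argument some derivative of `F` along the orbit of order at most `N = ⌊(k + l) / 2⌋` is
then of size `Λ`, and by divided differences the sublevel set `{‖F‖ ≤ ε}` on the orbit cannot
contain `N + 1` points whose mutual distances are large against `(ε / Λ) ^ (1 / N)`.

Since `c N < 1`, this bounds the integral of `‖F‖ ^ (-2 c)` over a disc of radius proportional to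
`‖x‖` by a multiple of `‖x‖² Λ ^ (-2 c)`, and `Λ` dominates `‖x‖ ^ k` and `‖y‖ ^ l`. Summing over
dyadic annuli gives geometric series of positive exponents `2 - 2 c k` and `2 - 2 c l`, which
converge uniformly in `t`.
-/

open scoped NNReal

section DividedDifferences

variable {K : Type*}

/-- The divided difference `f[z₀, …, z_q]` of `f` at the points of `s = {z₀, …, z_q}`. Indexing by a
finite set makes the nodes distinct. -/
def dividedDifference [Field K] [DecidableEq K] (s : Finset K) (f : K → K) : K :=
  ∑ z ∈ s, Lagrange.nodalWeight s id z * f z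

lemma dividedDifference_pow_of_le [Field K] [DecidableEq K] {s : Finset K} {q n : ℕ}
    (hs : s.card = q + 1) (hn : n ≤ q) :
    dividedDifference s (· ^ n) = if n = q then 1 else 0 := by
  have hdeg : ((Polynomial.X : Polynomial K) ^ n).degree < s.card := by
    rw [Polynomial.degree_X_pow, hs]
    exact_mod_cast Nat.lt_succ_of_le hn
  have hcoeff := Lagrange.coeff_eq_sum (v := id) Function.injective_id.injOn hdeg
  simp only [hs, Nat.add_sub_cancel, Polynomial.coeff_X_pow, Polynomial.eval_pow,
    Polynomial.eval_X, eq_comm (a := q)] at hcoeff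
  rw [hcoeff, dividedDifference]
  refine Finset.sum_congr rfl fun z _ => ?_
  rw [Lagrange.nodalWeight, Finset.prod_inv_distrib, id, div_eq_inv_mul]

lemma dividedDifference_mul_left [Field K] [DecidableEq K] {s : Finset K} {z : K} (hz : z ∈ s)
    (f : K → K) :
    dividedDifference s (fun w => w * f w) =
      z * dividedDifference s f + dividedDifference (s.erase z) f := by
  have hweight : ∀ w ∈ s.erase z,
      (w - z) * Lagrange.nodalWeight s id w = Lagrange.nodalWeight (s.erase z) id w := by
    intro w hw
    obtain ⟨hwz, _⟩ := Finset.mem_erase.mp hw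
    have hmem : z ∈ s.erase w := Finset.mem_erase.mpr ⟨hwz.symm, hz⟩
    rw [Lagrange.nodalWeight, ← Finset.mul_prod_erase _ _ hmem, Lagrange.nodalWeight,
      Finset.erase_right_comm, id, id, mul_inv_cancel_left₀ (sub_ne_zero.mpr hwz)]
  rw [← sub_eq_iff_eq_add', dividedDifference, dividedDifference, Finset.mul_sum,
    ← Finset.sum_sub_distrib, ← Finset.add_sum_erase _ _ hz, dividedDifference]
  rw [mul_left_comm, sub_self, zero_add]
  refine Finset.sum_congr rfl fun w hw => ?_
  rw [← hweight w hw]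
  ring

variable [NormedField K] [DecidableEq K]

lemma norm_dividedDifference_pow_le {ρ : ℝ} (n : ℕ) :
    ∀ {s : Finset K} {q : ℕ}, s.card = q + 1 → (∀ z ∈ s, ‖z‖ ≤ ρ) →
      ‖dividedDifference s (· ^ n)‖ ≤ n.choose q * ρ ^ (n - q) := by
  induction n with
  | zero =>
    intro s q hs _
    rw [dividedDifference_pow_of_le hs q.zero_le]
    rcases q with _ | q <;> simp
  | succ n ih =>
    intro s q hs hρ
    obtain ⟨z, hz⟩ : s.Nonempty := Finset.card_pos.mp (by lia)
    have hρ0 : 0 ≤ ρ := (norm_nonneg z).trans (hρ z hz)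
    have hcard : (s.erase z).card = q := by rw [Finset.card_erase_of_mem hz, hs, Nat.add_sub_cancel]
    have hstep : ‖dividedDifference s (· ^ (n + 1))‖ ≤
        ρ * (n.choose q * ρ ^ (n - q)) + ‖dividedDifference (s.erase z) (· ^ n)‖ := by
      simp only [pow_succ']
      rw [dividedDifference_mul_left hz]
      refine (norm_add_le _ _).trans (add_le_add_left ?_ _)
      rw [norm_mul]
      exact mul_le_mul (hρ z hz) (ih hs hρ) (norm_nonneg _) hρ0
    refine hstep.trans ?_
    rcases q with _ | q
    · rw [Finset.card_eq_zero.mp hcard]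
      simp [dividedDifference, pow_succ']
    · have herase := ih hcard fun w hw => hρ w (Finset.mem_of_mem_erase hw)
      have hshift :
          ρ * (n.choose (q + 1) * ρ ^ (n - (q + 1))) = n.choose (q + 1) * ρ ^ (n - q) := by
        rcases lt_or_ge n (q + 1) with hn | hn
        · simp [Nat.choose_eq_zero_of_lt hn]
        · rw [show n - q = n - (q + 1) + 1 by lia, pow_succ]
          ring
      rw [hshift, Nat.choose_succ_succ, Nat.add_sub_add_right]
      push_cast
      linarith

lemma norm_dividedDifference_le {s : Finset K} {q : ℕ} {d ε : ℝ} {f : K → K} (hd : 0 < d)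
    (hs : s.card = q + 1) (hsep : (s : Set K).Pairwise fun z w => d ≤ dist z w)
    (hf : ∀ z ∈ s, ‖f z‖ ≤ ε) :
    ‖dividedDifference s f‖ * d ^ q ≤ (q + 1) * ε := by
  have hweight : ∀ z ∈ s, ‖Lagrange.nodalWeight s id z‖ * d ^ q ≤ 1 := by
    intro z hz
    have hcard : (s.erase z).card = q := by rw [Finset.card_erase_of_mem hz, hs, Nat.add_sub_cancel]
    rw [Lagrange.nodalWeight, norm_prod, ← hcard, ← Finset.prod_const, ← Finset.prod_mul_distrib]
    refine Finset.prod_le_one (fun w _ => by positivity) fun w hw => ?_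
    obtain ⟨hwz, hws⟩ := Finset.mem_erase.mp hw
    have hdist : d ≤ ‖z - w‖ := by simpa only [dist_eq_norm] using hsep hz hws hwz.symm
    rw [id, id, norm_inv, inv_mul_le_one₀ (hd.trans_le hdist)]
    exact hdist
  calc ‖dividedDifference s f‖ * d ^ q
      ≤ ∑ z ∈ s, ‖Lagrange.nodalWeight s id z * f z‖ * d ^ q := by
        rw [← Finset.sum_mul]
        gcongr
        exact norm_sum_le _ _
    _ ≤ ∑ _z ∈ s, ε := by
        refine Finset.sum_le_sum fun z hz => ?_
        rw [norm_mul, mul_right_comm]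
        exact (mul_le_of_le_one_left (norm_nonneg _) (hweight z hz)).trans (hf z hz)
    _ = (q + 1) * ε := by rw [Finset.sum_const, hs, nsmul_eq_mul]; push_cast; rfl

lemma hasSum_dividedDifference {s : Finset K} {b : ℕ → K} {f : K → K}
    (hf : ∀ z ∈ s, HasSum (fun n => b n * z ^ n) (f z)) :
    HasSum (fun n => b n * dividedDifference s (· ^ n)) (dividedDifference s f) := by
  have hsum := hasSum_sum fun z hz => (hf z hz).mul_left (Lagrange.nodalWeight s id z)
  simpa only [dividedDifference, Finset.mul_sum, mul_left_comm] using hsum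

lemma sum_range_mul_dividedDifference_pow {s : Finset K} {q : ℕ} (hs : s.card = q + 1)
    (b : ℕ → K) : ∑ n ∈ Finset.range (q + 1), b n * dividedDifference s (· ^ n) = b q := by
  rw [Finset.sum_range_succ, dividedDifference_pow_of_le hs le_rfl, if_pos rfl, mul_one,
    add_eq_right]
  refine Finset.sum_eq_zero fun n hn => ?_
  have hnq := Finset.mem_range.mp hn
  rw [dividedDifference_pow_of_le hs hnq.le, if_neg hnq.ne, mul_zero]

lemma norm_dividedDifference_sub_coeff_le {s : Finset K} {q : ℕ} {b : ℕ → K} {f : K → K} {Λ ρ : ℝ}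
    (hs : s.card = q + 1) (hsρ : ∀ z ∈ s, ‖z‖ ≤ ρ) (hρ : ρ ≤ 1 / 4) (hb : ∀ n, ‖b n‖ ≤ Λ)
    (hf : ∀ z ∈ s, HasSum (fun n => b n * z ^ n) (f z)) :
    ‖dividedDifference s f - b q‖ ≤ 2 ^ (q + 2) * Λ * ρ := by
  obtain ⟨z, hz⟩ : s.Nonempty := Finset.card_pos.mp (by lia)
  have hρ0 : 0 ≤ ρ := (norm_nonneg z).trans (hsρ z hz)
  have hΛ : 0 ≤ Λ := (norm_nonneg _).trans (hb 0)
  have htail : HasSum (fun n => b (n + (q + 1)) * dividedDifference s (· ^ (n + (q + 1))))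
      (dividedDifference s f - b q) := by
    rw [← sum_range_mul_dividedDifference_pow hs b]
    exact (hasSum_nat_add_iff' (q + 1)).mpr (hasSum_dividedDifference hf)
  have hgeom := (hasSum_geometric_of_lt_one (r := 2 * ρ) (by positivity) (by linarith)).mul_left
    (2 ^ (q + 1) * Λ * ρ)
  have hterm : ∀ n, ‖b (n + (q + 1)) * dividedDifference s (· ^ (n + (q + 1)))‖ ≤
      2 ^ (q + 1) * Λ * ρ * (2 * ρ) ^ n := by
    intro n
    have hchoose : (((n + (q + 1)).choose q : ℕ) : ℝ) ≤ 2 ^ (n + (q + 1)) := by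
      exact_mod_cast Nat.choose_le_two_pow _ _
    calc _ ≤ Λ * (((n + (q + 1)).choose q : ℕ) * ρ ^ (n + (q + 1) - q)) := by
          rw [norm_mul]
          exact mul_le_mul (hb _) (norm_dividedDifference_pow_le _ hs hsρ) (norm_nonneg _) hΛ
      _ ≤ Λ * (2 ^ (n + (q + 1)) * ρ ^ (n + 1)) := by
          rw [show n + (q + 1) - q = n + 1 by lia]
          gcongr
      _ = 2 ^ (q + 1) * Λ * ρ * (2 * ρ) ^ n := by ring
  refine (htail.norm_le_of_bounded hgeom hterm).trans ?_
  have hinv : (1 - 2 * ρ)⁻¹ ≤ 2 := inv_le_of_inv_le₀ two_pos (by linarith)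
  calc 2 ^ (q + 1) * Λ * ρ * (1 - 2 * ρ)⁻¹ ≤ 2 ^ (q + 1) * Λ * ρ * 2 := by gcongr
    _ = 2 ^ (q + 2) * Λ * ρ := by ring

lemma half_mul_le_norm_dividedDifference {s : Finset K} {q : ℕ} {b : ℕ → K} {f : K → K}
    {Λ κ ρ : ℝ} (hs : s.card = q + 1) (hsρ : ∀ z ∈ s, ‖z‖ ≤ ρ) (hρ : ρ ≤ 1 / 4)
    (hρκ : ρ ≤ κ / 2 ^ (q + 3)) (hb : ∀ n, ‖b n‖ ≤ Λ) (hq : κ * Λ ≤ ‖b q‖)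
    (hf : ∀ z ∈ s, HasSum (fun n => b n * z ^ n) (f z)) :
    κ / 2 * Λ ≤ ‖dividedDifference s f‖ := by
  have hΛ : 0 ≤ Λ := (norm_nonneg _).trans (hb 0)
  have hcoeff : ‖b q - dividedDifference s f‖ ≤ κ / 2 * Λ :=
    calc ‖b q - dividedDifference s f‖ ≤ 2 ^ (q + 2) * Λ * ρ := by
          rw [norm_sub_rev]
          exact norm_dividedDifference_sub_coeff_le hs hsρ hρ hb hf
      _ ≤ 2 ^ (q + 2) * Λ * (κ / 2 ^ (q + 3)) := by gcongr
      _ = κ / 2 * Λ := by field_simp; ring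
  linarith [norm_sub_norm_le (b q) (dividedDifference s f)]

end DividedDifferences

section SparseSublevels

/-- A quantitative form of the assertion that `h` is comparable to the modulus of a polynomial of
degree at most `N` and of size `Λ` on a set of diameter about `r`: whenever some sublevel set
`{h ≤ ε}` in `B` contains `N + 1` points that are `r * d`-separated, `ε` is at least of the order of
`Λ * d ^ N`. -/
def HasSparseSublevels {X : Type*} [PseudoMetricSpace X] (h : X → ℝ) (B : Set X) (N : ℕ)
    (r Λ C : ℝ) : Prop :=
  ∀ ⦃ε d : ℝ⦄, 0 < d → d ≤ 1 → ∀ s : Finset X, ↑s ⊆ B → (∀ x ∈ s, h x ≤ ε) →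
    (s : Set X).Pairwise (fun x y => r * d ≤ dist x y) → s.card = N + 1 → Λ * d ^ N ≤ C * ε

lemma exists_hasSparseSublevels_of_coeff_ge (K : Type*) [NormedField K] (N : ℕ) {κ : ℝ}
    (hκ : 0 < κ) :
    ∃ ρ > 0, ρ ≤ 1 / 4 ∧ ∃ C > 0, ∀ (f : K → K) (b : ℕ → K) (Λ : ℝ),
      (∀ z, ‖z‖ < 1 → HasSum (fun n => b n * z ^ n) (f z)) → (∀ n, ‖b n‖ ≤ Λ) →
      (∃ q ≤ N, κ * Λ ≤ ‖b q‖) →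
      HasSparseSublevels (fun z => ‖f z‖) (Metric.closedBall 0 ρ) N 1 Λ C := by
  classical
  refine ⟨min (1 / 4) (κ / 2 ^ (N + 3)), by positivity, min_le_left _ _, 2 * (N + 1) / κ,
    by positivity, ?_⟩
  rintro f b Λ hf hb ⟨q, hqN, hq⟩ ε d hd hd1 s hsB hε hsep hs
  have hΛ : 0 ≤ Λ := (norm_nonneg _).trans (hb 0)
  obtain ⟨u, hus, hu⟩ := Finset.exists_subset_card_eq (s := s) (n := q + 1) (by lia)
  have huρ : ∀ z ∈ u, ‖z‖ ≤ min (1 / 4) (κ / 2 ^ (N + 3)) := fun z hz =>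
    mem_closedBall_zero_iff.mp (hsB (hus hz))
  have hρκ : min (1 / 4) (κ / 2 ^ (N + 3)) ≤ κ / 2 ^ (q + 3) := by
    refine (min_le_right _ _).trans ?_
    gcongr
    norm_num
  have hlower : κ / 2 * Λ ≤ ‖dividedDifference u f‖ :=
    half_mul_le_norm_dividedDifference hu huρ (min_le_left _ _) hρκ hb hq fun z hz =>
      hf z ((huρ z hz).trans_lt (min_lt_of_left_lt (by norm_num)))
  have hε0 : 0 ≤ ε := by
    obtain ⟨z, hz⟩ : s.Nonempty := Finset.card_pos.mp (by lia)
    exact (norm_nonneg _).trans (hε z hz)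
  have hupper : ‖dividedDifference u f‖ * d ^ q ≤ (q + 1) * ε := by
    refine norm_dividedDifference_le hd hu (fun z hz w hw hzw => ?_) fun z hz => hε z (hus hz)
    simpa only [one_mul] using hsep (hus hz) (hus hw) hzw
  have : κ / 2 * (Λ * d ^ N) ≤ (N + 1) * ε :=
    calc κ / 2 * (Λ * d ^ N) ≤ κ / 2 * Λ * d ^ q := by
          rw [mul_assoc]
          gcongr κ / 2 * (Λ * ?_)
          exact pow_le_pow_of_le_one hd.le hd1 hqN
      _ ≤ ‖dividedDifference u f‖ * d ^ q := by gcongr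
      _ ≤ (q + 1) * ε := hupper
      _ ≤ (N + 1) * ε := by gcongr
  rw [div_mul_eq_mul_div, le_div_iff₀ hκ]
  linarith

lemma HasSparseSublevels.of_subset_image {X Y : Type*} [PseudoMetricSpace X] [PseudoMetricSpace Y]
    {h : Y → ℝ} {φ : X → Y} {A : Set X} {B : Set Y} {N : ℕ} {r Λ C : ℝ} {L : ℝ≥0}
    (hh : HasSparseSublevels (h ∘ φ) A N r Λ C) (hφ : LipschitzOnWith L φ A) (hL : 0 < L)
    (hB : B ⊆ φ '' A) : HasSparseSublevels h B N (L * r) Λ C := by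
  classical
  intro ε d hd hd1 s hsB hε hsep hs
  obtain ⟨u, huA, hinj, rfl⟩ :=
    Finset.exists_subset_injOn_image_eq_of_surjOn A s (hsB.trans hB)
  refine hh hd hd1 u huA (fun x hx => hε _ (Finset.mem_image_of_mem φ hx)) (fun x hx y hy hxy => ?_)
    (by rwa [Finset.card_image_of_injOn hinj] at hs)
  have hsep_image := hsep (Finset.mem_image_of_mem φ hx) (Finset.mem_image_of_mem φ hy)
    (hinj.ne hx hy hxy)
  have hdist := hsep_image.trans (hφ.dist_le_mul x (huA hx) y (huA hy))
  rw [mul_assoc] at hdist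
  exact le_of_mul_le_mul_left hdist hL

end SparseSublevels

section SublevelIntegrals

lemma volume_le_of_packingNumber_le {S : Set ℂ} {δ : ℝ≥0} {N : ℕ}
    (hS : Metric.packingNumber δ S ≤ N) :
    volume S ≤ ENNReal.ofReal (N * (Real.pi * δ ^ 2)) := by
  have hcov : Metric.coveringNumber δ S ≤ N := (Metric.coveringNumber_le_packingNumber δ S).trans hS
  have htop : Metric.coveringNumber δ S ≠ ⊤ := (hcov.trans_lt (ENat.natCast_lt_top N)).ne
  have hcover := Metric.isCover_iff_subset_iUnion_closedBall.mp (Metric.isCover_minimalCover htop)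
  have hfin : (Metric.minimalCover δ S).Finite := Metric.finite_minimalCover
  have hcard : hfin.toFinset.card ≤ N := by
    rw [← Metric.encard_minimalCover htop, hfin.encard_eq_coe_toFinset_card] at hcov
    exact_mod_cast hcov
  calc volume S ≤ volume (⋃ y ∈ hfin.toFinset, Metric.closedBall y (δ : ℝ)) := by
        refine measure_mono (hcover.trans ?_)
        simp only [Set.Finite.mem_toFinset, subset_refl]
    _ ≤ ∑ y ∈ hfin.toFinset, volume (Metric.closedBall y (δ : ℝ)) :=
        measure_biUnion_finset_le _ _
    _ = ENNReal.ofReal (hfin.toFinset.card * (Real.pi * δ ^ 2)) := by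
        simp only [Complex.volume_closedBall, Finset.sum_const, nsmul_eq_mul]
        rw [ENNReal.ofReal_mul (by positivity), ENNReal.ofReal_natCast,
          ENNReal.ofReal_mul Real.pi_nonneg, ENNReal.ofReal_pow δ.coe_nonneg, mul_comm _ (_ ^ 2)]
        congr 3
        exact (Real.toNNReal_of_nonneg Real.pi_nonneg).symm
    _ ≤ ENNReal.ofReal (N * (Real.pi * δ ^ 2)) := by gcongr

lemma HasSparseSublevels.packingNumber_le {X : Type*} [PseudoMetricSpace X] {h : X → ℝ} {B : Set X}
    {N : ℕ} {r Λ C ε d : ℝ} (hh : HasSparseSublevels h B N r Λ C) (hd : 0 < d) (hd1 : d ≤ 1)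
    (hε : C * ε < Λ * d ^ N) :
    Metric.packingNumber (r * d).toNNReal {x ∈ B | h x ≤ ε} ≤ N := by
  refine iSup_le fun S => iSup₂_le fun hS hsep => ?_
  by_contra! hcard
  obtain ⟨u, huS, hu⟩ := Set.exists_subset_encard_eq (Order.add_one_le_of_lt hcard)
  have hufin : u.Finite := Set.finite_of_encard_eq_coe (k := N + 1) (by exact_mod_cast hu)
  refine hε.not_ge (hh hd hd1 hufin.toFinset ?_ ?_ ?_ ?_)
  · exact fun x hx => (hS (huS (hufin.mem_toFinset.mp hx))).1
  · exact fun x hx => (hS (huS (hufin.mem_toFinset.mp hx))).2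
  · rw [hufin.coe_toFinset]
    intro x hx y hy hxy
    have hlt : ENNReal.ofReal (r * d) < edist x y := hsep (huS hx) (huS hy) hxy
    rw [edist_dist] at hlt
    exact (ENNReal.ofReal_lt_ofReal_iff'.mp hlt).1.le
  · rw [hufin.encard_eq_coe_toFinset_card] at hu
    exact_mod_cast hu

lemma lintegral_Ioc_const_mul_rpow {A p : ℝ} (hA : 0 ≤ A) (hp : 0 < p) :
    ∫⁻ t in Set.Ioc (0 : ℝ) 1, ENNReal.ofReal (A * t ^ (p - 1)) = ENNReal.ofReal (A * (1 / p)) := by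
  have hint : IntegrableOn (fun t : ℝ => A * t ^ (p - 1)) (Set.Ioc 0 1) :=
    ((intervalIntegrable_iff_integrableOn_Ioc_of_le zero_le_one).mp
      (intervalIntegral.intervalIntegrable_rpow' (by linarith))).const_mul A
  rw [← ofReal_integral_eq_lintegral_ofReal hint, integral_const_mul,
    ← intervalIntegral.integral_of_le zero_le_one, integral_rpow (Or.inl (by linarith)),
    Real.one_rpow, sub_add_cancel, Real.zero_rpow hp.ne', sub_zero]
  filter_upwards [ae_restrict_mem measurableSet_Ioc] with t ht
  exact mul_nonneg hA (Real.rpow_nonneg ht.1.le _)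

lemma lintegral_Ioi_one_const_mul_rpow {A p : ℝ} (hA : 0 ≤ A) (hp : 0 < p) :
    ∫⁻ t in Set.Ioi (1 : ℝ), ENNReal.ofReal (A * t ^ (-p - 1)) = ENNReal.ofReal (A * (1 / p)) := by
  have hexp : -p - 1 < -1 := by linarith
  rw [← ofReal_integral_eq_lintegral_ofReal
    ((integrableOn_Ioi_rpow_of_lt hexp one_pos).const_mul A), integral_const_mul,
    integral_Ioi_rpow_of_lt hexp one_pos, Real.one_rpow, sub_add_cancel, neg_div_neg_eq]
  filter_upwards [ae_restrict_mem measurableSet_Ioi] with t (ht : 1 < t)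
  exact mul_nonneg hA (Real.rpow_nonneg (one_pos.trans ht).le _)

lemma lintegral_rpow_le_of_measure_lt_le {α : Type*} [MeasurableSpace α] {μ : Measure α}
    {f : α → ℝ} {p s A : ℝ} (hf0 : 0 ≤ᵐ[μ] f) (hf : AEMeasurable f μ) (hp : 0 < p) (hps : p < s)
    (hA : 0 ≤ A) (huniv : μ Set.univ ≤ ENNReal.ofReal A)
    (htail : ∀ t, 1 < t → μ {x | t < f x} ≤ ENNReal.ofReal (A * t ^ (-s))) :
    ∫⁻ x, ENNReal.ofReal (f x ^ p) ∂μ ≤ ENNReal.ofReal (A * (s / (s - p))) := by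
  have hs : 0 < s - p := by linarith
  have hsmall : ∫⁻ t in Set.Ioc (0 : ℝ) 1, μ {x | t < f x} * ENNReal.ofReal (t ^ (p - 1)) ≤
      ENNReal.ofReal (A * (1 / p)) := by
    rw [← lintegral_Ioc_const_mul_rpow hA hp]
    refine setLIntegral_mono' measurableSet_Ioc fun t _ => ?_
    rw [ENNReal.ofReal_mul hA]
    gcongr
    exact (measure_mono (Set.subset_univ _)).trans huniv
  have hlarge : ∫⁻ t in Set.Ioi (1 : ℝ), μ {x | t < f x} * ENNReal.ofReal (t ^ (p - 1)) ≤
      ENNReal.ofReal (A * (1 / (s - p))) := by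
    rw [← lintegral_Ioi_one_const_mul_rpow hA hs]
    refine setLIntegral_mono' measurableSet_Ioi fun t (ht : 1 < t) => ?_
    have ht0 : 0 < t := one_pos.trans ht
    refine (mul_le_mul_left (htail t ht) _).trans_eq ?_
    rw [← ENNReal.ofReal_mul (by positivity), mul_assoc, ← Real.rpow_add ht0]
    ring_nf
  rw [lintegral_rpow_eq_lintegral_meas_lt_mul μ hf0 hf hp, ← Set.Ioc_union_Ioi_eq_Ioi zero_le_one,
    lintegral_union measurableSet_Ioi (Set.Ioc_disjoint_Ioi le_rfl)]
  refine (mul_le_mul_right (add_le_add hsmall hlarge) _).trans_eq ?_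
  rw [← ENNReal.ofReal_add (by positivity) (by positivity), ← ENNReal.ofReal_mul hp.le]
  congr 1
  field_simp
  ring

lemma HasSparseSublevels.volume_lt_div_le {h : ℂ → ℝ} {B : Set ℂ} {N : ℕ} {r Λ C s t : ℝ}
    (hh : HasSparseSublevels h B N r Λ C) (hr : 0 ≤ r) (hΛ : 0 < Λ) (hC : 0 < C) (hs : 0 ≤ s)
    (hsN : s * N ≤ 2) (ht : 1 < t) :
    volume {x ∈ B | h x ≤ Λ / (2 * C * t)} ≤ ENNReal.ofReal (N * (Real.pi * r ^ 2) * t ^ (-s)) := by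
  have ht0 : 0 < t := one_pos.trans ht
  have hd1 : t ^ (-s / 2) ≤ 1 := Real.rpow_le_one_of_one_le_of_nonpos ht.le (by linarith)
  have hdN : t⁻¹ ≤ (t ^ (-s / 2)) ^ N := by
    rw [← Real.rpow_natCast, ← Real.rpow_mul ht0.le, ← Real.rpow_neg_one]
    exact Real.rpow_le_rpow_of_exponent_le ht.le (by linarith)
  have hε : C * (Λ / (2 * C * t)) < Λ * (t ^ (-s / 2)) ^ N :=
    calc C * (Λ / (2 * C * t)) = Λ * t⁻¹ / 2 := by field_simp
      _ < Λ * t⁻¹ := half_lt_self (by positivity)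
      _ ≤ Λ * (t ^ (-s / 2)) ^ N := by gcongr
  refine (volume_le_of_packingNumber_le (hh.packingNumber_le (by positivity) hd1 hε)).trans_eq ?_
  rw [Real.coe_toNNReal _ (by positivity), mul_pow, ← Real.rpow_natCast (t ^ _),
    ← Real.rpow_mul ht0.le]
  norm_num [mul_assoc]

lemma HasSparseSublevels.lintegral_div_rpow_le {h : ℂ → ℝ} {B : Set ℂ} {N : ℕ} {r Λ C p s : ℝ}
    (hh : HasSparseSublevels h B N r Λ C) (hr : 0 ≤ r) (hΛ : 0 < Λ) (hC : 0 < C)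
    (hh0 : ∀ x, 0 ≤ h x) (hmeas : AEMeasurable h (volume.restrict B))
    (hvol : volume B ≤ ENNReal.ofReal (Real.pi * r ^ 2)) (hp : 0 < p) (hps : p < s)
    (hsN : s * N ≤ 2) :
    ∫⁻ x in B, ENNReal.ofReal ((Λ / (2 * C * h x)) ^ p) ≤
      ENNReal.ofReal ((N + 1) * (Real.pi * r ^ 2) * (s / (s - p))) := by
  have hmeas_div : AEMeasurable (fun x => Λ / (2 * C * h x)) (volume.restrict B) :=
    (hmeas.const_mul _).const_div _
  refine lintegral_rpow_le_of_measure_lt_le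
    (ae_of_all _ fun x => div_nonneg hΛ.le (mul_nonneg (by positivity) (hh0 x)))
    hmeas_div hp hps (by positivity) ?_ fun t ht => ?_
  · rw [Measure.restrict_apply_univ]
    refine hvol.trans (ENNReal.ofReal_le_ofReal (le_mul_of_one_le_left (by positivity) ?_))
    linarith [N.cast_nonneg (α := ℝ)]
  · rw [Measure.restrict_apply₀ (nullMeasurableSet_lt aemeasurable_const hmeas_div)]
    calc volume ({x | t < Λ / (2 * C * h x)} ∩ B)
        ≤ volume {x ∈ B | h x ≤ Λ / (2 * C * t)} := by
          refine measure_mono fun x ⟨(hx : t < Λ / (2 * C * h x)), hxB⟩ => ⟨hxB, ?_⟩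
          rcases (hh0 x).eq_or_lt with hx0 | hx0
          · rw [← hx0]
            positivity
          · rw [le_div_iff₀ (by positivity)]
            rw [lt_div_iff₀ (by positivity)] at hx
            linarith
      _ ≤ _ := hh.volume_lt_div_le hr hΛ hC (hp.trans hps).le hsN ht
      _ ≤ _ := by
          gcongr
          linarith

lemma exists_gt_mul_le_one {c : ℝ} {N : ℕ} (hcN : c * N < 1) : ∃ s > c, s * N ≤ 1 := by
  refine ⟨c + (1 - c * N) / (N + 1), lt_add_of_pos_right _ (by
    have : 0 < 1 - c * N := by linarith
    positivity), ?_⟩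
  have hfrac : (1 - c * N) / (N + 1) * N ≤ 1 - c * N := by
    rw [div_mul_eq_mul_div, div_le_iff₀ (by positivity)]
    nlinarith
  linarith

lemma exists_lintegral_rpow_neg_le_of_hasSparseSublevels {c C : ℝ} {N : ℕ} (hc : 0 < c)
    (hcN : c * N < 1) (hC : 0 < C) :
    ∃ K > 0, ∀ (h : ℂ → ℝ) (B : Set ℂ) (r Λ : ℝ), 0 < r → 0 < Λ → HasSparseSublevels h B N r Λ C →
      (∀ x, 0 ≤ h x) → AEMeasurable h (volume.restrict B) →
      volume B ≤ ENNReal.ofReal (Real.pi * r ^ 2) →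
      ∫⁻ x in B, ENNReal.ofReal (h x ^ (-(2 * c))) ≤
        ENNReal.ofReal (K * (r ^ 2 * Λ ^ (-(2 * c)))) := by
  obtain ⟨s, hcs, hsN⟩ := exists_gt_mul_le_one hcN
  have hs : 0 < s := hc.trans hcs
  have : 0 < s - c := by linarith
  refine ⟨(2 * C) ^ (2 * c) * ((N + 1) * Real.pi * (s / (s - c))), by positivity, ?_⟩
  intro h B r Λ hr hΛ hh hh0 hmeas hvol
  have hscale : ∀ x, h x ^ (-(2 * c)) = (2 * C) ^ (2 * c) * Λ ^ (-(2 * c)) *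
      (Λ / (2 * C * h x)) ^ (2 * c) := by
    intro x
    rw [Real.div_rpow hΛ.le (mul_nonneg (by positivity) (hh0 x)),
      Real.mul_rpow (by positivity) (hh0 x), Real.rpow_neg (hh0 x), Real.rpow_neg hΛ.le]
    field_simp
  simp only [hscale, ENNReal.ofReal_mul (by positivity : 0 ≤ (2 * C) ^ (2 * c) * Λ ^ (-(2 * c)))]
  rw [lintegral_const_mul' _ _ ENNReal.ofReal_ne_top]
  refine (mul_le_mul_right (hh.lintegral_div_rpow_le hr.le hΛ hC hh0 hmeas hvol (by positivity)
    (by linarith : 2 * c < 2 * s) (by linarith)) _).trans_eq ?_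
  rw [← ENNReal.ofReal_mul (by positivity), ← mul_sub, mul_div_mul_left _ _ two_ne_zero]
  ring_nf

end SublevelIntegrals

section Moments

lemma card_le_of_add_one_notMem {S : Finset ℤ} {a : ℤ} {n : ℕ} (hS : S ⊆ Finset.Icc a (a + n))
    (hgap : ∀ j ∈ S, j + 1 ∉ S) : S.card ≤ n / 2 + 1 := by
  rw [← Finset.card_range (n / 2 + 1)]
  refine Finset.card_le_card_of_injOn (fun j => ((j - a) / 2).toNat) (fun j hj => ?_)
    fun i hi j hj hij => ?_
  · have hj := Finset.mem_Icc.mp (hS hj)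
    simp only [Finset.coe_range, Set.mem_Iio]
    lia
  · have hia := Finset.mem_Icc.mp (hS hi)
    have hja := Finset.mem_Icc.mp (hS hj)
    by_contra hne
    obtain rfl | rfl : j = i + 1 ∨ i = j + 1 := by
      simp only at hij
      lia
    · exact hgap i hi hj
    · exact hgap j hj hi

variable {ι K : Type*} [NormedField K]

lemma norm_le_sum_norm_moments [DecidableEq ι] {S : Finset ι} {v : ι → K} (hv : Set.InjOn v S)
    {N : ℕ} (hS : S.card ≤ N + 1) (g : ι → K) {j : ι} (hj : j ∈ S) :
    ‖g j‖ ≤ (∑ p ∈ Finset.range (N + 1), ‖(Lagrange.basis S v j).coeff p‖) *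
      ∑ p ∈ Finset.range (N + 1), ‖∑ i ∈ S, g i * v i ^ p‖ := by
  have hdeg : (Lagrange.basis S v j).natDegree < N + 1 := by
    rw [Lagrange.natDegree_basis hv hj]
    have := Finset.card_pos.mpr ⟨j, hj⟩
    lia
  have hg : g j = ∑ p ∈ Finset.range (N + 1),
      (Lagrange.basis S v j).coeff p * ∑ i ∈ S, g i * v i ^ p := by
    calc g j = ∑ i ∈ S, g i * (Lagrange.basis S v j).eval (v i) := by
          rw [Finset.sum_eq_single_of_mem j hj, Lagrange.eval_basis_self hv hj, mul_one]
          intro i hi hij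
          rw [Lagrange.eval_basis_of_ne hij.symm hi, mul_zero]
      _ = _ := by
          simp only [Polynomial.eval_eq_sum_range' hdeg, Finset.mul_sum]
          rw [Finset.sum_comm]
          exact Finset.sum_congr rfl fun p _ => Finset.sum_congr rfl fun i _ => mul_left_comm _ _ _
  rw [hg, Finset.sum_mul]
  refine norm_sum_le_of_le _ fun p hp => ?_
  rw [norm_mul]
  gcongr
  exact Finset.single_le_sum (f := fun p => ‖∑ i ∈ S, g i * v i ^ p‖) (fun _ _ => norm_nonneg _) hp

lemma exists_sum_norm_le_sum_norm_moments {I : Finset ι} {v : ι → K} (hv : Set.InjOn v I) (N : ℕ) :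
    ∃ C > 0, ∀ S ⊆ I, S.card ≤ N + 1 → ∀ g : ι → K,
      ∑ j ∈ S, ‖g j‖ ≤ C * ∑ p ∈ Finset.range (N + 1), ‖∑ i ∈ S, g i * v i ^ p‖ := by
  classical
  let C : Finset ι → ℝ := fun S =>
    ∑ j ∈ S, ∑ p ∈ Finset.range (N + 1), ‖(Lagrange.basis S v j).coeff p‖
  have hC0 : ∀ S, 0 ≤ C S := fun S => by positivity
  refine ⟨1 + ∑ S ∈ I.powerset, C S,
    add_pos_of_pos_of_nonneg one_pos (Finset.sum_nonneg fun S _ => hC0 S), ?_⟩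
  intro S hSI hcard g
  have hCS : C S ≤ 1 + ∑ S ∈ I.powerset, C S := by
    have := Finset.single_le_sum (fun S _ => hC0 S) (Finset.mem_powerset.mpr hSI)
    linarith
  calc ∑ j ∈ S, ‖g j‖ ≤ C S * ∑ p ∈ Finset.range (N + 1), ‖∑ i ∈ S, g i * v i ^ p‖ := by
        rw [Finset.sum_mul]
        exact Finset.sum_le_sum fun j hj => norm_le_sum_norm_moments (hv.mono hSI) hcard g hj
    _ ≤ _ := by gcongr

lemma sum_mul_filter_not_lt_le (I : Finset ι) {f w : ι → ℝ} {δ : ℝ} (hδ : 0 ≤ δ)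
    (hw : ∀ j ∈ I, 0 ≤ w j) :
    ∑ j ∈ I with ¬ δ < f j, f j * w j ≤ δ * ∑ j ∈ I, w j := by
  rw [Finset.mul_sum]
  calc ∑ j ∈ I with ¬ δ < f j, f j * w j ≤ ∑ j ∈ I with ¬ δ < f j, δ * w j := by
        refine Finset.sum_le_sum fun j hj => ?_
        obtain ⟨hjI, hle⟩ := Finset.mem_filter.mp hj
        exact mul_le_mul_of_nonneg_right (not_lt.mp hle) (hw j hjI)
    _ ≤ ∑ j ∈ I, δ * w j :=
        Finset.sum_le_sum_of_subset_of_nonneg (Finset.filter_subset _ _)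
          fun j hj _ => mul_nonneg hδ (hw j hj)

lemma norm_sum_filter_le (I : Finset ι) (v g : ι → K) (p : ℕ) {δ : ℝ} (hδ : 0 ≤ δ) :
    ‖∑ j ∈ I with δ < ‖g j‖, g j * v j ^ p‖ ≤
      ‖∑ j ∈ I, g j * v j ^ p‖ + δ * ∑ j ∈ I, ‖v j‖ ^ p := by
  have hrest : ‖∑ j ∈ I with ¬ δ < ‖g j‖, g j * v j ^ p‖ ≤ δ * ∑ j ∈ I, ‖v j‖ ^ p := by
    refine (norm_sum_le _ _).trans ?_
    simp only [norm_mul, norm_pow]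
    exact sum_mul_filter_not_lt_le I hδ fun j _ => by positivity
  rw [← Finset.sum_filter_add_sum_filter_not I (fun j => δ < ‖g j‖)]
  linarith [norm_le_add_norm_add (∑ j ∈ I with δ < ‖g j‖, g j * v j ^ p)
    (∑ j ∈ I with ¬ δ < ‖g j‖, g j * v j ^ p)]

lemma exists_moment_ge_of_card_large_le {I : Finset ι} {v : ι → K} (hv : Set.InjOn v I) (N : ℕ) :
    ∃ η > 0, ∃ κ > 0, ∀ (g : ι → K) (m : ℕ → K),
      {j ∈ I | η * ∑ i ∈ I, ‖g i‖ < ‖g j‖}.card ≤ N + 1 →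
      (∀ q ≤ N, ‖m q - ∑ j ∈ I, g j * v j ^ q‖ ≤ η * ∑ j ∈ I, ‖g j‖) →
      ∃ q ≤ N, κ * ∑ j ∈ I, ‖g j‖ ≤ ‖m q‖ := by
  obtain ⟨C, hC, hmoment⟩ := exists_sum_norm_le_sum_norm_moments hv N
  let V : ℝ := ∑ q ∈ Finset.range (N + 1), (1 + ∑ j ∈ I, ‖v j‖ ^ q)
  have hV : 0 ≤ V := by positivity
  obtain ⟨η, hη, hηV⟩ : ∃ η > 0, η * (I.card + C * V) ≤ 1 / 2 :=
    ⟨1 / (2 * (I.card + C * V + 1)), by positivity, by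
      rw [div_mul_eq_mul_div, div_le_div_iff₀ (by positivity) two_pos]
      linarith⟩
  refine ⟨η, hη, 1 / (2 * C * (N + 1)), by positivity, fun g m hcard hm => ?_⟩
  set Λ := ∑ j ∈ I, ‖g j‖
  have hηΛ : 0 ≤ η * Λ := by positivity
  have hlarge : Λ - η * Λ * I.card ≤ ∑ j ∈ I with η * Λ < ‖g j‖, ‖g j‖ := by
    have hsmall := sum_mul_filter_not_lt_le I (f := fun j => ‖g j‖) (w := 1) hηΛ
      fun _ _ => zero_le_one
    have hsplit := Finset.sum_filter_add_sum_filter_not I (fun j => η * Λ < ‖g j‖) fun j => ‖g j‖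
    simp only [Pi.one_apply, mul_one, Finset.sum_const, nsmul_eq_mul] at hsmall
    linarith
  have hsum : ∑ j ∈ I with η * Λ < ‖g j‖, ‖g j‖ ≤
      C * (∑ q ∈ Finset.range (N + 1), ‖m q‖ + η * Λ * V) := by
    refine (hmoment _ (Finset.filter_subset _ _) hcard g).trans ?_
    rw [Finset.mul_sum (f := fun q => 1 + ∑ j ∈ I, ‖v j‖ ^ q), ← Finset.sum_add_distrib]
    gcongr with q hq
    linarith [norm_sum_filter_le I v g q hηΛ, hm q (Finset.mem_range_succ_iff.mp hq),
      norm_le_norm_add_norm_sub' (∑ j ∈ I, g j * v j ^ q) (m q),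
      norm_sub_rev (m q) (∑ j ∈ I, g j * v j ^ q)]
  have hhalf : Λ ≤ 2 * C * ∑ q ∈ Finset.range (N + 1), ‖m q‖ := by
    have := mul_le_mul_of_nonneg_right hηV (by positivity : 0 ≤ Λ)
    linarith
  obtain ⟨q, hq, hle⟩ := Finset.exists_le_of_sum_le (f := fun _ => 1 / (2 * C * (N + 1)) * Λ)
    (g := fun q => ‖m q‖) Finset.nonempty_range_add_one (by
      rw [Finset.sum_const, Finset.card_range, nsmul_eq_mul]
      push_cast
      field_simp
      linarith)
  exact ⟨q, Finset.mem_range_succ_iff.mp hq, hle⟩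

end Moments

section DoubleSeries

/-- The sum `∑ a_{m,n} x^m y^n` of a double power series, as a sum over the index set `ℕ × ℕ`. -/
noncomputable def doubleSeries (a : ℕ → ℕ → ℂ) (x y : ℂ) : ℂ :=
  ∑' mn : ℕ × ℕ, a mn.1 mn.2 * x ^ mn.1 * y ^ mn.2

/-- The pair `(m, n)` is encoded by its weight `m - n` and by `min m n`. -/
def weightEquiv : ℤ × ℕ ≃ ℕ × ℕ where
  toFun p := (p.2 + p.1.toNat, p.2 + (-p.1).toNat)
  invFun mn := (mn.1 - mn.2, min mn.1 mn.2)
  left_inv p := by ext <;> simp only <;> lia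
  right_inv mn := by ext <;> simp only <;> lia

/-- The sum `∑ a_{m,n} t ^ min m n` over the pairs `(m, n)` with `m - n = j`. -/
noncomputable def weightSeries (a : ℕ → ℕ → ℂ) (j : ℤ) (t : ℂ) : ℂ :=
  ∑' n : ℕ, a (n + j.toNat) (n + (-j).toNat) * t ^ n

/-- The part of `doubleSeries a` of weight `j` under the action `(λx, λ⁻¹y)` of `ℂˣ`, that is, the
sum of the monomials with `m - n = j`. -/
noncomputable def weightPart (a : ℕ → ℕ → ℂ) (j : ℤ) (x y : ℂ) : ℂ :=
  x ^ j.toNat * y ^ (-j).toNat * weightSeries a j (x * y)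

lemma weightPart_orbit (a : ℕ → ℕ → ℂ) (j : ℤ) (x y w : ℂ) :
    weightPart a j (x * Complex.exp w) (y * Complex.exp (-w)) =
      weightPart a j x y * Complex.exp (j * w) := by
  have hprod : x * Complex.exp w * (y * Complex.exp (-w)) = x * y := by
    rw [mul_mul_mul_comm, ← Complex.exp_add, add_neg_cancel, Complex.exp_zero, mul_one]
  have hj : (j : ℂ) = j.toNat - (-j).toNat := by
    exact_mod_cast (show j = (j.toNat : ℤ) - (-j).toNat by lia)
  have hexp : Complex.exp (j * w) = Complex.exp w ^ j.toNat * Complex.exp (-w) ^ (-j).toNat := by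
    rw [← Complex.exp_nat_mul, ← Complex.exp_nat_mul, ← Complex.exp_add, hj]
    ring_nf
  rw [weightPart, hprod, hexp, weightPart]
  ring

variable {a : ℕ → ℕ → ℂ} {r : ℝ}

lemma differentiableOn_doubleSeries_comp
    (hs : Summable fun mn : ℕ × ℕ => ‖a mn.1 mn.2‖ * r ^ mn.1 * r ^ mn.2) {U : Set ℂ}
    (hU : IsOpen U) {φ ψ : ℂ → ℂ} (hφ : DifferentiableOn ℂ φ U) (hψ : DifferentiableOn ℂ ψ U)
    (hφr : ∀ z ∈ U, ‖φ z‖ ≤ r) (hψr : ∀ z ∈ U, ‖ψ z‖ ≤ r) :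
    DifferentiableOn ℂ (fun z => doubleSeries a (φ z) (ψ z)) U := by
  refine Complex.differentiableOn_tsum_of_summable_norm hs
    (fun mn => ((differentiableOn_const _).mul (hφ.pow _)).mul (hψ.pow _)) hU fun mn z hz => ?_
  have hr : 0 ≤ r := (norm_nonneg _).trans (hφr z hz)
  rw [norm_mul, norm_mul, norm_pow, norm_pow]
  gcongr
  · exact hφr z hz
  · exact hψr z hz

lemma weightPart_eq_tsum (a : ℕ → ℕ → ℂ) (j : ℤ) (x y : ℂ) :
    weightPart a j x y = ∑' n : ℕ, a (n + j.toNat) (n + (-j).toNat) * x ^ (n + j.toNat) *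
      y ^ (n + (-j).toNat) := by
  rw [weightPart, weightSeries, ← tsum_mul_left]
  exact tsum_congr fun n => by ring

lemma hasSum_weightPart (hs : Summable fun mn : ℕ × ℕ => ‖a mn.1 mn.2‖ * r ^ mn.1 * r ^ mn.2)
    {x y : ℂ} (hx : ‖x‖ ≤ r) (hy : ‖y‖ ≤ r) :
    HasSum (fun j => weightPart a j x y) (doubleSeries a x y) := by
  have hr : 0 ≤ r := (norm_nonneg _).trans hx
  have hsum : Summable fun mn : ℕ × ℕ => a mn.1 mn.2 * x ^ mn.1 * y ^ mn.2 := by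
    refine hs.of_norm_bounded fun mn => ?_
    rw [norm_mul, norm_mul, norm_pow, norm_pow]
    gcongr
  have hweight : HasSum _ (doubleSeries a x y) := weightEquiv.hasSum_iff.mpr hsum.hasSum
  convert hweight.prod_fiberwise fun j => (hweight.summable.prod_factor j).hasSum using 2 with j
  exact weightPart_eq_tsum a j x y

lemma pow_le_pow_mul_div_pow {u : ℝ} (hu : 0 ≤ u) (hr : 0 < r) (hur : u ≤ r) {k m : ℕ}
    (hkm : k ≤ m) : u ^ m ≤ r ^ m * (u / r) ^ k :=
  calc u ^ m = r ^ m * (u / r) ^ m := by rw [← mul_pow, mul_div_cancel₀ _ hr.ne']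
    _ ≤ r ^ m * (u / r) ^ k := by
      gcongr ?_ * ?_
      exact pow_le_pow_of_le_one (by positivity) ((div_le_one hr).mpr hur) hkm

lemma norm_monomial_le (b : ℂ) {x y : ℂ} (hr : 0 < r) (hx : ‖x‖ ≤ r) (hy : ‖y‖ ≤ r)
    {k l m n : ℕ} (h : k ≤ m ∨ l ≤ n) :
    ‖b * x ^ m * y ^ n‖ ≤ ‖b‖ * r ^ m * r ^ n * ((‖x‖ / r) ^ k + (‖y‖ / r) ^ l) := by
  rw [norm_mul, norm_mul, norm_pow, norm_pow, mul_assoc, mul_assoc, mul_assoc]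
  gcongr ‖b‖ * ?_
  rcases h with hkm | hln
  · calc ‖x‖ ^ m * ‖y‖ ^ n ≤ r ^ m * (‖x‖ / r) ^ k * r ^ n := by
          gcongr
          exact pow_le_pow_mul_div_pow (norm_nonneg x) hr hx hkm
      _ = r ^ m * (r ^ n * (‖x‖ / r) ^ k) := by ring
      _ ≤ _ := by
          gcongr
          exact le_add_of_nonneg_right (by positivity)
  · calc ‖x‖ ^ m * ‖y‖ ^ n ≤ r ^ m * (r ^ n * (‖y‖ / r) ^ l) := by
          gcongr
          exact pow_le_pow_mul_div_pow (norm_nonneg y) hr hy hln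
      _ ≤ _ := by
          gcongr
          exact le_add_of_nonneg_left (by positivity)

lemma exists_norm_doubleSeries_sub_le
    (hs : Summable fun mn : ℕ × ℕ => ‖a mn.1 mn.2‖ * r ^ mn.1 * r ^ mn.2) (hr : 0 < r) (k l : ℕ) :
    ∃ A, ∀ x y : ℂ, ‖x‖ ≤ r → ‖y‖ ≤ r →
      ‖doubleSeries a x y - ∑ j ∈ Finset.Icc (-l : ℤ) k, weightPart a j x y‖ ≤
        A * ((‖x‖ / r) ^ (k + 1) + (‖y‖ / r) ^ (l + 1)) := by
  let T : ℤ × ℕ → ℝ := fun p => ‖a (p.2 + p.1.toNat) (p.2 + (-p.1).toNat)‖ *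
    r ^ (p.2 + p.1.toNat) * r ^ (p.2 + (-p.1).toNat)
  have hT : Summable T := weightEquiv.summable_iff.mpr hs
  refine ⟨∑' j : {j // j ∉ Finset.Icc (-l : ℤ) k}, ∑' n, T (j, n), fun x y hx hy => ?_⟩
  have hpart : ∀ j : {j // j ∉ Finset.Icc (-l : ℤ) k}, ‖weightPart a j x y‖ ≤
      (∑' n, T (j, n)) * ((‖x‖ / r) ^ (k + 1) + (‖y‖ / r) ^ (l + 1)) := by
    rintro ⟨j, hj⟩
    rw [weightPart_eq_tsum]
    refine tsum_of_norm_bounded ((hT.prod_factor j).hasSum.mul_right _) fun n =>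
      norm_monomial_le _ hr hx hy ?_
    rw [Finset.mem_Icc] at hj
    lia
  have htail : HasSum (fun j : {j // j ∉ Finset.Icc (-l : ℤ) k} => weightPart a j x y)
      (doubleSeries a x y - ∑ j ∈ Finset.Icc (-l : ℤ) k, weightPart a j x y) := by
    rw [Finset.hasSum_compl_iff (f := fun j => weightPart a j x y), sub_add_cancel]
    exact hasSum_weightPart hs hx hy
  exact htail.norm_le_of_bounded ((hT.prod.subtype _).hasSum.mul_right _) hpart

end DoubleSeries

section Dominance

open Asymptotics Filter Topology

section Analytic

variable {𝕜 : Type*} [NontriviallyNormedField 𝕜] {φ ψ : 𝕜 → 𝕜} {z₀ : 𝕜}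

lemma eventually_eq_zero_or_exists_isTheta_pow (hφ : AnalyticAt 𝕜 φ z₀) :
    (∀ᶠ z in 𝓝 z₀, φ z = 0) ∨ ∃ n : ℕ, φ =Θ[𝓝 z₀] fun z => (z - z₀) ^ n := by
  by_cases htop : analyticOrderAt φ z₀ = ⊤
  · exact Or.inl (analyticOrderAt_eq_top.mp htop)
  · obtain ⟨u, hu, hu0, hφu⟩ := hφ.analyticOrderAt_ne_top.mp htop
    refine Or.inr ⟨analyticOrderNatAt φ z₀, hφu.trans_isTheta ?_⟩
    have hunit : u =Θ[𝓝 z₀] fun _ => (1 : 𝕜) :=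
      ((isEquivalent_const_iff_tendsto hu0).mpr hu.continuousAt).isTheta.trans
        (isTheta_const_const hu0 one_ne_zero)
    simpa only [smul_eq_mul, mul_one] using
      (isTheta_refl (fun z => (z - z₀) ^ analyticOrderNatAt φ z₀) (𝓝 z₀)).mul hunit

lemma isBigO_sub_pow_of_le (z₀ : 𝕜) {m n : ℕ} (hmn : m ≤ n) :
    (fun z => (z - z₀) ^ n) =O[𝓝 z₀] fun z => (z - z₀) ^ m := by
  obtain ⟨q, rfl⟩ := exists_add_of_le hmn
  have hbdd : (fun z => (z - z₀) ^ q) =O[𝓝 z₀] fun _ => (1 : 𝕜) :=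
    Tendsto.isBigO_one 𝕜 (ContinuousAt.tendsto (by fun_prop))
  simpa only [pow_add, mul_one] using (isBigO_refl (fun z => (z - z₀) ^ m) (𝓝 z₀)).mul hbdd

lemma isBigO_or_isBigO_sub_mul (hφ : AnalyticAt 𝕜 φ z₀) (hψ : AnalyticAt 𝕜 ψ z₀) :
    φ =O[𝓝 z₀] ψ ∨ ψ =O[𝓝 z₀] fun z => (z - z₀) * φ z := by
  rcases eventually_eq_zero_or_exists_isTheta_pow hφ with hφ0 | ⟨n, hn⟩
  · exact Or.inl (IsBigO.of_bound 0 (hφ0.mono fun z hz => by simp [hz]))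
  rcases eventually_eq_zero_or_exists_isTheta_pow hψ with hψ0 | ⟨m, hm⟩
  · exact Or.inr (IsBigO.of_bound 0 (hψ0.mono fun z hz => by simp [hz]))
  rcases le_or_gt m n with hmn | hnm
  · exact Or.inl ((hn.1.trans (isBigO_sub_pow_of_le z₀ hmn)).trans hm.2)
  · refine Or.inr ((hm.1.trans (isBigO_sub_pow_of_le z₀ hnm)).trans ?_)
    simpa only [pow_succ'] using (isBigO_refl (fun z => z - z₀) (𝓝 z₀)).mul hn.2

end Analytic

lemma isLittleO_of_isBigO_mul_of_tendsto_zero {α 𝕜 : Type*} [NormedField 𝕜] {L : Filter α}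
    {f g u : α → 𝕜} (hu : Tendsto u L (𝓝 0)) (hf : f =O[L] fun p => u p * g p) : f =o[L] g := by
  simpa only [one_mul] using
    hf.trans_isLittleO (((isLittleO_one_iff 𝕜).mpr hu).mul_isBigO (isBigO_refl g L))

variable {a : ℕ → ℕ → ℂ} {r : ℝ}

lemma analyticAt_weightSeries
    (hs : Summable fun mn : ℕ × ℕ => ‖a mn.1 mn.2‖ * r ^ mn.1 * r ^ mn.2) (hr : 0 < r) (j : ℤ) :
    AnalyticAt ℂ (weightSeries a j) 0 := by
  have hrow : Summable fun n : ℕ => ‖a (n + j.toNat) (n + (-j).toNat)‖ * (r ^ 2) ^ n := by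
    refine (summable_mul_left_iff (a := r ^ j.toNat * r ^ (-j).toNat) (by positivity)).mp ?_
    refine ((weightEquiv.summable_iff.mpr hs).prod_factor j).congr fun n => ?_
    simp only [weightEquiv, Function.comp_apply, Equiv.coe_fn_mk]
    ring
  have hdiff : DifferentiableOn ℂ (weightSeries a j) (Metric.ball 0 (r ^ 2)) := by
    refine Complex.differentiableOn_tsum_of_summable_norm hrow
      (fun n => by fun_prop) Metric.isOpen_ball fun n t ht => ?_
    rw [norm_mul, norm_pow]
    gcongr
    exact (mem_ball_zero_iff.mp ht).le
  exact hdiff.analyticAt (Metric.ball_mem_nhds 0 (by positivity))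

lemma weightPart_isLittleO_or
    (hs : Summable fun mn : ℕ × ℕ => ‖a mn.1 mn.2‖ * r ^ mn.1 * r ^ mn.2) (hr : 0 < r) (j : ℤ) :
    ((fun p : ℂ × ℂ => weightPart a j p.1 p.2) =o[𝓝 0]
        fun p => weightPart a (j + 1) p.1 p.2) ∨
      (fun p : ℂ × ℂ => weightPart a (j + 1) p.1 p.2) =o[𝓝 0]
        fun p => weightPart a j p.1 p.2 := by
  have hfst : Tendsto (fun p : ℂ × ℂ => p.1) (𝓝 0) (𝓝 0) := continuous_fst.tendsto 0
  have hsnd : Tendsto (fun p : ℂ × ℂ => p.2) (𝓝 0) (𝓝 0) := continuous_snd.tendsto 0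
  have hprod : Tendsto (fun p : ℂ × ℂ => p.1 * p.2) (𝓝 0) (𝓝 0) :=
    Continuous.tendsto' (by fun_prop) _ _ (by simp)
  have hcomp {φ ψ : ℂ → ℂ} (h : φ =O[𝓝 0] ψ) (M : ℂ × ℂ → ℂ) :
      (fun p : ℂ × ℂ => M p * φ (p.1 * p.2)) =O[𝓝 0] fun p => M p * ψ (p.1 * p.2) :=
    (isBigO_refl M _).mul (h.comp_tendsto hprod)
  have hanalytic := analyticAt_weightSeries hs hr
  simp only [weightPart]
  -- For `0 ≤ j`, `W_{j+1} / W_j` is `x` times a ratio of series in `t = x y`. This ratio is bounded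
  -- or its inverse is `O(t)`, and in the latter case `W_j / W_{j+1}` is `O(t / x) = O(y)`.
  rcases le_or_gt 0 j with hj | hj
  · rw [show (j + 1).toNat = j.toNat + 1 by lia, show (-(j + 1)).toNat = (-j).toNat by lia]
    rcases isBigO_or_isBigO_sub_mul (hanalytic (j + 1)) (hanalytic j) with h | h
    · refine Or.inr (isLittleO_of_isBigO_mul_of_tendsto_zero hfst ?_)
      exact (hcomp h _).congr (fun p => rfl) fun p => by ring
    · refine Or.inl (isLittleO_of_isBigO_mul_of_tendsto_zero hsnd ?_)
      exact (hcomp h _).congr (fun p => rfl) fun p => by ring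
  · rw [show (j + 1).toNat = j.toNat by lia, show (-j).toNat = (-(j + 1)).toNat + 1 by lia]
    rcases isBigO_or_isBigO_sub_mul (hanalytic j) (hanalytic (j + 1)) with h | h
    · refine Or.inl (isLittleO_of_isBigO_mul_of_tendsto_zero hsnd ?_)
      exact (hcomp h _).congr (fun p => rfl) fun p => by ring
    · refine Or.inr (isLittleO_of_isBigO_mul_of_tendsto_zero hfst ?_)
      exact (hcomp h _).congr (fun p => rfl) fun p => by ring

lemma pow_isBigO_weightPart
    (hs : Summable fun mn : ℕ × ℕ => ‖a mn.1 mn.2‖ * r ^ mn.1 * r ^ mn.2) (hr : 0 < r) {j : ℤ}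
    (hj : a j.toNat (-j).toNat ≠ 0) :
    (fun p : ℂ × ℂ => p.1 ^ j.toNat * p.2 ^ (-j).toNat) =O[𝓝 0]
      fun p => weightPart a j p.1 p.2 := by
  have hlim : Tendsto (fun p : ℂ × ℂ => weightSeries a j (p.1 * p.2)) (𝓝 0)
      (𝓝 (weightSeries a j 0)) := by
    refine (analyticAt_weightSeries hs hr j).continuousAt.tendsto.comp ?_
    exact Continuous.tendsto' (by fun_prop) _ _ (by simp)
  have h0 : weightSeries a j 0 ≠ 0 := by
    rw [weightSeries, tsum_eq_single 0 fun n hn => by simp [hn]]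
    simpa using hj
  simpa only [weightPart, mul_one] using (isBigO_refl _ _).mul
    ((isBigO_const_const (1 : ℂ) h0 (𝓝 (0 : ℂ × ℂ))).trans
      ((isEquivalent_const_iff_tendsto h0).mpr hlim).isBigO_symm)

end Dominance

section ExponentialSums

open scoped Nat

variable {ι : Type*} {I : Finset ι} {v : ι → ℂ} {f : ℂ → ℂ}

lemma iteratedDeriv_sum_mul_exp (I : Finset ι) (g v : ι → ℂ) (q : ℕ) :
    iteratedDeriv q (fun w => ∑ j ∈ I, g j * Complex.exp (v j * w)) 0 = ∑ j ∈ I, g j * v j ^ q := by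
  rw [iteratedDeriv_fun_sum fun j _ => by fun_prop]
  refine Finset.sum_congr rfl fun j _ => ?_
  rw [iteratedDeriv_const_mul_field, iteratedDeriv_cexp_const_mul]
  simp

lemma norm_iteratedDeriv_sub_moment_le (hf : DiffContOnCl ℂ f (Metric.ball 0 1)) {g : ι → ℂ}
    {δ : ℝ} (hδ : ∀ w, ‖w‖ ≤ 1 → ‖f w - ∑ j ∈ I, g j * Complex.exp (v j * w)‖ ≤ δ) (q : ℕ) :
    ‖iteratedDeriv q f 0 - ∑ j ∈ I, g j * v j ^ q‖ ≤ q ! * δ := by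
  have hexp : Differentiable ℂ fun w => ∑ j ∈ I, g j * Complex.exp (v j * w) := by fun_prop
  have hcauchy := Complex.norm_iteratedDeriv_le_of_forall_mem_sphere_norm_le q one_pos
    (hf.sub hexp.diffContOnCl) fun w hw => hδ w (mem_sphere_zero_iff_norm.mp hw).le
  rwa [iteratedDeriv_sub, iteratedDeriv_sum_mul_exp, one_pow, div_one] at hcauchy
  · exact (hf.differentiableOn.analyticAt (Metric.ball_mem_nhds 0 one_pos)).contDiffAt
  · exact hexp.analyticAt 0 |>.contDiffAt

lemma norm_sum_mul_exp_le (I : Finset ι) (g v : ι → ℂ) {w : ℂ} (hw : ‖w‖ ≤ 1) :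
    ‖∑ j ∈ I, g j * Complex.exp (v j * w)‖ ≤ (∑ j ∈ I, Real.exp ‖v j‖) * ∑ j ∈ I, ‖g j‖ := by
  rw [Finset.mul_sum]
  refine norm_sum_le_of_le I fun j hj => ?_
  rw [norm_mul, mul_comm]
  gcongr
  calc ‖Complex.exp (v j * w)‖ ≤ Real.exp ‖v j * w‖ := Complex.norm_exp_le_exp_norm _
    _ ≤ Real.exp ‖v j‖ := by
      rw [norm_mul]
      gcongr
      exact mul_le_of_le_one_right (norm_nonneg _) hw
    _ ≤ ∑ i ∈ I, Real.exp ‖v i‖ :=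
      Finset.single_le_sum (f := fun i => Real.exp ‖v i‖) (fun i _ => (Real.exp_pos _).le) hj

lemma hasSum_taylorSeries_zero (hf : DifferentiableOn ℂ f (Metric.ball 0 1)) {z : ℂ}
    (hz : ‖z‖ < 1) : HasSum (fun n => iteratedDeriv n f 0 / n ! * z ^ n) (f z) := by
  refine (Complex.hasSum_taylorSeries_on_ball hf (mem_ball_zero_iff.mpr hz)).congr_fun fun n => ?_
  rw [sub_zero, smul_eq_mul, smul_eq_mul]
  ring

lemma norm_iteratedDeriv_div_factorial_le (hf : DiffContOnCl ℂ f (Metric.ball 0 1)) {M : ℝ}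
    (hM : ∀ w, ‖w‖ ≤ 1 → ‖f w‖ ≤ M) (n : ℕ) : ‖iteratedDeriv n f 0 / (n !)‖ ≤ M := by
  have hcauchy := Complex.norm_iteratedDeriv_le_of_forall_mem_sphere_norm_le n one_pos hf
    fun w hw => hM w (mem_sphere_zero_iff_norm.mp hw).le
  rw [norm_div, Complex.norm_natCast, div_le_iff₀ (by positivity), mul_comm]
  simpa only [one_pow, div_one] using hcauchy

lemma exists_hasSparseSublevels_of_norm_sub_sum_exp_le (hv : Set.InjOn v I) (N : ℕ) :
    ∃ η > 0, ∃ ρ > 0, ρ ≤ 1 / 4 ∧ ∃ C > 0, ∀ (g : ι → ℂ) (f : ℂ → ℂ),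
      DiffContOnCl ℂ f (Metric.ball 0 1) →
      {j ∈ I | η * ∑ i ∈ I, ‖g i‖ < ‖g j‖}.card ≤ N + 1 →
      (∀ w, ‖w‖ ≤ 1 → ‖f w - ∑ j ∈ I, g j * Complex.exp (v j * w)‖ ≤ η * ∑ j ∈ I, ‖g j‖) →
      HasSparseSublevels (fun w => ‖f w‖) (Metric.closedBall 0 ρ) N 1 (∑ j ∈ I, ‖g j‖) C := by
  obtain ⟨η, hη, κ, hκ, hmoment⟩ := exists_moment_ge_of_card_large_le hv N
  let M : ℝ := η + ∑ j ∈ I, Real.exp ‖v j‖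
  have hM : 0 < M := by positivity
  obtain ⟨ρ, hρ, hρ4, C, hC, hsparse⟩ :=
    exists_hasSparseSublevels_of_coeff_ge ℂ N (κ := κ / (N ! * M)) (by positivity)
  refine ⟨η / N !, by positivity, ρ, hρ, hρ4, C / M, by positivity, fun g f hf hcard hclose => ?_⟩
  let S : ℝ := ∑ j ∈ I, ‖g j‖
  have hS : 0 ≤ S := by positivity
  have hη_le : η / N ! ≤ η := div_le_self hη.le (mod_cast Nat.factorial_pos N)
  obtain ⟨q, hqN, hq⟩ : ∃ q ≤ N, κ * S ≤ ‖iteratedDeriv q f 0‖ := by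
    refine hmoment g _ ((Finset.card_le_card ?_).trans hcard) fun q hqN =>
      (norm_iteratedDeriv_sub_moment_le hf hclose q).trans ?_
    · exact Finset.monotone_filter_right I fun j _ hj => lt_of_le_of_lt (by gcongr) hj
    · calc (q ! : ℝ) * (η / N ! * S) ≤ N ! * (η / N ! * S) := by gcongr
        _ = η * S := by field_simp
  have hbound : ∀ w, ‖w‖ ≤ 1 → ‖f w‖ ≤ M * S := fun w hw => by
    linarith [norm_le_insert' (f w) (∑ j ∈ I, g j * Complex.exp (v j * w)), hclose w hw,
      norm_sum_mul_exp_le I g v hw, mul_le_mul_of_nonneg_right hη_le hS]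
  have hcoeff : κ / (N ! * M) * (M * S) ≤ ‖iteratedDeriv q f 0 / (q !)‖ := by
    rw [norm_div, Complex.norm_natCast]
    calc κ / (N ! * M) * (M * S) = κ * S / N ! := by field_simp
      _ ≤ ‖iteratedDeriv q f 0‖ / q ! := by gcongr
  have hsparseMS := hsparse f _ (M * S) (fun z => hasSum_taylorSeries_zero hf.differentiableOn)
    (norm_iteratedDeriv_div_factorial_le hf hbound) ⟨q, hqN, hcoeff⟩
  intro ε d hd hd1 s hsB hε hsep hs
  rw [div_mul_eq_mul_div, le_div_iff₀ hM]
  linarith [hsparseMS hd hd1 s hsB hε hsep hs]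

end ExponentialSums

section Orbits

open Asymptotics Filter Topology

/-- The total size at `(x, y)` of the parts of `doubleSeries a` of weights `-l, …, k`. With `k` and
`l` the orders of vanishing of the series on the two axes, it is the size of the series on the orbit
of `(x, y)` under `(λx, λ⁻¹y)`, and no other weight matters near the origin. -/
noncomputable def weightNorm (a : ℕ → ℕ → ℂ) (k l : ℕ) (x y : ℂ) : ℝ :=
  ∑ j ∈ Finset.Icc (-l : ℤ) k, ‖weightPart a j x y‖

variable {a : ℕ → ℕ → ℂ} {r : ℝ} {k l : ℕ}

lemma weightNorm_nonneg (a : ℕ → ℕ → ℂ) (k l : ℕ) (x y : ℂ) : 0 ≤ weightNorm a k l x y :=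
  Finset.sum_nonneg fun _ _ => norm_nonneg _

lemma pow_isBigO_weightNorm
    (hs : Summable fun mn : ℕ × ℕ => ‖a mn.1 mn.2‖ * r ^ mn.1 * r ^ mn.2) (hr : 0 < r) {j : ℤ}
    (hjkl : j ∈ Finset.Icc (-l : ℤ) k) (hj : a j.toNat (-j).toNat ≠ 0) :
    (fun p : ℂ × ℂ => p.1 ^ j.toNat * p.2 ^ (-j).toNat) =O[𝓝 0]
      fun p => weightNorm a k l p.1 p.2 := by
  refine (pow_isBigO_weightPart hs hr hj).trans (IsBigO.of_bound 1 (.of_forall fun p => ?_))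
  rw [one_mul, Real.norm_of_nonneg (weightNorm_nonneg a k l p.1 p.2)]
  exact Finset.single_le_sum (f := fun j => ‖weightPart a j p.1 p.2‖)
    (fun _ _ => norm_nonneg _) hjkl

lemma fst_pow_isBigO_weightNorm
    (hs : Summable fun mn : ℕ × ℕ => ‖a mn.1 mn.2‖ * r ^ mn.1 * r ^ mn.2) (hr : 0 < r)
    (hak : a k 0 ≠ 0) :
    (fun p : ℂ × ℂ => p.1 ^ k) =O[𝓝 0] fun p => weightNorm a k l p.1 p.2 := by
  simpa using pow_isBigO_weightNorm hs hr (j := k) (k := k) (l := l)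
    (Finset.mem_Icc.mpr (by lia)) (by simpa using hak)

lemma snd_pow_isBigO_weightNorm
    (hs : Summable fun mn : ℕ × ℕ => ‖a mn.1 mn.2‖ * r ^ mn.1 * r ^ mn.2) (hr : 0 < r)
    (hal : a 0 l ≠ 0) :
    (fun p : ℂ × ℂ => p.2 ^ l) =O[𝓝 0] fun p => weightNorm a k l p.1 p.2 := by
  simpa using pow_isBigO_weightNorm hs hr (j := -l) (k := k) (l := l)
    (Finset.mem_Icc.mpr (by lia)) (by simpa using hal)

lemma eventually_card_dominant_weights_le
    (hs : Summable fun mn : ℕ × ℕ => ‖a mn.1 mn.2‖ * r ^ mn.1 * r ^ mn.2) (hr : 0 < r) (k l : ℕ)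
    {η : ℝ} (hη : 0 < η) :
    ∀ᶠ p : ℂ × ℂ in 𝓝 0, {j ∈ Finset.Icc (-l : ℤ) k |
      η * weightNorm a k l p.1 p.2 < ‖weightPart a j p.1 p.2‖}.card ≤ (k + l) / 2 + 1 := by
  have hconsecutive (j : ℤ) : ∀ᶠ p : ℂ × ℂ in 𝓝 0,
      ‖weightPart a j p.1 p.2‖ ≤ η * ‖weightPart a (j + 1) p.1 p.2‖ ∨
        ‖weightPart a (j + 1) p.1 p.2‖ ≤ η * ‖weightPart a j p.1 p.2‖ := by
    rcases weightPart_isLittleO_or hs hr j with h | h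
    · exact (h.def hη).mono fun p => Or.inl
    · exact (h.def hη).mono fun p => Or.inr
  have hall := (Finset.eventually_all (Finset.Icc (-l : ℤ) k)).mpr fun j _ => hconsecutive j
  filter_upwards [hall] with p hp
  have hle {j : ℤ} (hj : j ∈ Finset.Icc (-l : ℤ) k) :
      η * ‖weightPart a j p.1 p.2‖ ≤ η * weightNorm a k l p.1 p.2 := by
    gcongr
    exact Finset.single_le_sum (f := fun j => ‖weightPart a j p.1 p.2‖)
      (fun _ _ => norm_nonneg _) hj
  refine card_le_of_add_one_notMem (a := -l) (fun j hj => ?_) fun j hj hj' => ?_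
  · have := (Finset.mem_filter.mp hj).1
    rw [Finset.mem_Icc] at this ⊢
    push_cast
    lia
  · obtain ⟨hjI, hjlarge⟩ := Finset.mem_filter.mp hj
    obtain ⟨hjI', hjlarge'⟩ := Finset.mem_filter.mp hj'
    rcases hp j hjI with h | h
    · linarith [hle hjI']
    · linarith [hle hjI]

lemma norm_mul_exp_le (x : ℂ) {w : ℂ} (hw : ‖w‖ ≤ 1) : ‖x * Complex.exp w‖ ≤ 3 * ‖x‖ := by
  have hexp : ‖Complex.exp w‖ ≤ 3 :=
    (Complex.norm_exp_le_exp_norm w).trans ((Real.exp_le_exp.mpr hw).trans Real.exp_one_lt_three.le)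
  rw [norm_mul, mul_comm]
  gcongr

lemma eventually_three_mul_norm_lt (hr : 0 < r) :
    ∀ᶠ p : ℂ × ℂ in 𝓝 0, 3 * ‖p.1‖ < r ∧ 3 * ‖p.2‖ < r := by
  have hcont : Continuous fun p : ℂ × ℂ => max (3 * ‖p.1‖) (3 * ‖p.2‖) := by fun_prop
  filter_upwards [hcont.tendsto' 0 0 (by simp) |>.eventually_lt_const hr] with p hp
  exact max_lt_iff.mp hp

lemma diffContOnCl_doubleSeries_orbit
    (hs : Summable fun mn : ℕ × ℕ => ‖a mn.1 mn.2‖ * r ^ mn.1 * r ^ mn.2) {x y : ℂ}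
    (hx : 3 * ‖x‖ < r) (hy : 3 * ‖y‖ < r) :
    DiffContOnCl ℂ (fun w => doubleSeries a (x * Complex.exp w) (y * Complex.exp (-w)))
      (Metric.ball 0 1) := by
  let U : Set ℂ := {w | ‖x * Complex.exp w‖ < r} ∩ {w | ‖y * Complex.exp (-w)‖ < r}
  have hU : IsOpen U :=
    (isOpen_lt (by fun_prop) (by fun_prop)).inter (isOpen_lt (by fun_prop) (by fun_prop))
  refine DifferentiableOn.diffContOnCl_ball (U := U) (differentiableOn_doubleSeries_comp hs hU
    (by fun_prop) (by fun_prop) (fun w hw => hw.1.le) fun w hw => hw.2.le) fun w hw => ?_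
  rw [mem_closedBall_zero_iff] at hw
  exact ⟨(norm_mul_exp_le x hw).trans_lt hx,
    (norm_mul_exp_le y (by rwa [norm_neg])).trans_lt hy⟩

lemma isLittleO_mul_norm_pow_succ {α 𝕜 : Type*} [NormedField 𝕜] {L : Filter α} {u : α → 𝕜}
    {Λ : α → ℝ} {n : ℕ} (hu : Tendsto u L (𝓝 0)) (h : (fun p => u p ^ n) =O[L] Λ) (c : ℝ) :
    (fun p => (c * ‖u p‖) ^ (n + 1)) =o[L] Λ := by
  have hsucc : (fun p => u p * u p ^ n) =o[L] fun p => 1 * Λ p :=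
    ((isLittleO_one_iff ℝ).mpr hu).mul_isBigO h
  refine (hsucc.norm_left.const_mul_left (c ^ (n + 1))).congr (fun p => ?_) fun p => one_mul _
  rw [← pow_succ', norm_pow, mul_pow]

lemma eventually_norm_doubleSeries_orbit_sub_le
    (hs : Summable fun mn : ℕ × ℕ => ‖a mn.1 mn.2‖ * r ^ mn.1 * r ^ mn.2) (hr : 0 < r)
    (hak : a k 0 ≠ 0) (hal : a 0 l ≠ 0) {η : ℝ} (hη : 0 < η) :
    ∀ᶠ p : ℂ × ℂ in 𝓝 0, ∀ w : ℂ, ‖w‖ ≤ 1 →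
      ‖doubleSeries a (p.1 * Complex.exp w) (p.2 * Complex.exp (-w)) -
        ∑ j ∈ Finset.Icc (-l : ℤ) k, weightPart a j p.1 p.2 * Complex.exp (j * w)‖ ≤
      η * weightNorm a k l p.1 p.2 := by
  obtain ⟨A, hA⟩ := exists_norm_doubleSeries_sub_le hs hr k l
  have hfst := isLittleO_mul_norm_pow_succ (continuous_fst.tendsto (0 : ℂ × ℂ))
    (fst_pow_isBigO_weightNorm (l := l) hs hr hak) (3 / r)
  have hsnd := isLittleO_mul_norm_pow_succ (continuous_snd.tendsto (0 : ℂ × ℂ))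
    (snd_pow_isBigO_weightNorm (k := k) hs hr hal) (3 / r)
  have herror := ((hfst.add hsnd).const_mul_left |A|).def hη
  filter_upwards [herror, eventually_three_mul_norm_lt hr] with p hp ⟨hx, hy⟩ w hw
  have hxw := norm_mul_exp_le p.1 hw
  have hyw := norm_mul_exp_le p.2 (w := -w) (by rwa [norm_neg])
  rw [Real.norm_of_nonneg (by positivity), Real.norm_of_nonneg (weightNorm_nonneg a k l p.1 p.2)]
    at hp
  simp only [← weightPart_orbit]
  refine ((hA _ _ (hxw.trans hx.le) (hyw.trans hy.le)).trans ?_).trans hp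
  rw [div_mul_eq_mul_div, div_mul_eq_mul_div]
  gcongr
  exact le_abs_self A

theorem exists_hasSparseSublevels_doubleSeries_orbit
    (hs : Summable fun mn : ℕ × ℕ => ‖a mn.1 mn.2‖ * r ^ mn.1 * r ^ mn.2) (hr : 0 < r)
    (hak : a k 0 ≠ 0) (hal : a 0 l ≠ 0) :
    ∃ ρ > 0, ρ ≤ 1 / 4 ∧ ∃ C > 0, ∀ᶠ p : ℂ × ℂ in 𝓝 0,
      HasSparseSublevels
        (fun w => ‖doubleSeries a (p.1 * Complex.exp w) (p.2 * Complex.exp (-w))‖)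
        (Metric.closedBall 0 ρ) ((k + l) / 2) 1 (weightNorm a k l p.1 p.2) C := by
  obtain ⟨η, hη, ρ, hρ, hρ4, C, hC, hsparse⟩ := exists_hasSparseSublevels_of_norm_sub_sum_exp_le
    (I := Finset.Icc (-l : ℤ) k) Int.cast_injective.injOn ((k + l) / 2)
  refine ⟨ρ, hρ, hρ4, C, hC, ?_⟩
  filter_upwards [eventually_card_dominant_weights_le hs hr k l hη,
    eventually_norm_doubleSeries_orbit_sub_le hs hr hak hal hη,
    eventually_three_mul_norm_lt hr] with p hcard hclose hp
  exact hsparse _ _ (diffContOnCl_doubleSeries_orbit hs hp.1 hp.2) hcard hclose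

end Orbits

section LocalEstimate

open Filter Topology

lemma ball_subset_image_mul_exp {x₀ : ℂ} (hx₀ : x₀ ≠ 0) {ρ : ℝ} (hρ : ρ ≤ 1) :
    Metric.ball x₀ (ρ / 2 * ‖x₀‖) ⊆
      (fun w => x₀ * Complex.exp w) '' Metric.closedBall 0 ρ := by
  intro x hx
  have hnear : ‖x / x₀ - 1‖ < ρ / 2 := by
    rw [div_sub_one hx₀, norm_div, div_lt_iff₀ (norm_pos_iff.mpr hx₀)]
    exact mem_ball_iff_norm.mp hx
  have hlog := Complex.norm_log_one_add_half_le_self (z := x / x₀ - 1) (by linarith)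
  have hpos := norm_nonneg (x / x₀ - 1)
  rw [add_sub_cancel] at hlog
  have hx0 : x / x₀ ≠ 0 := fun h0 => by
    rw [h0, zero_sub, norm_neg, norm_one] at hnear
    linarith
  refine ⟨Complex.log (x / x₀), mem_closedBall_zero_iff.mpr (by linarith), ?_⟩
  simp only [Complex.exp_log hx0, mul_div_cancel₀ _ hx₀]

lemma lipschitzOnWith_mul_exp (x₀ : ℂ) :
    LipschitzOnWith (3 * ‖x₀‖₊) (fun w => x₀ * Complex.exp w) (Metric.closedBall 0 1) := by
  refine (convex_closedBall 0 1).lipschitzOnWith_of_nnnorm_deriv_le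
    (fun w _ => by fun_prop) fun w hw => ?_
  rw [deriv_const_mul _ (by fun_prop), Complex.deriv_exp, ← NNReal.coe_le_coe]
  simpa using norm_mul_exp_le x₀ (mem_closedBall_zero_iff.mp hw)

lemma HasSparseSublevels.of_comp_mul_exp {f : ℂ → ℝ} {x₀ : ℂ} (hx₀ : x₀ ≠ 0) {ρ : ℝ} (hρ : ρ ≤ 1)
    {N : ℕ} {Λ C : ℝ}
    (hf : HasSparseSublevels (fun w => f (x₀ * Complex.exp w)) (Metric.closedBall 0 ρ) N 1 Λ C) :
    HasSparseSublevels f (Metric.ball x₀ (ρ / 2 * ‖x₀‖)) N (3 * ‖x₀‖) Λ C := by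
  have hlip := (lipschitzOnWith_mul_exp x₀).mono (Metric.closedBall_subset_closedBall hρ)
  have hL : 0 < 3 * ‖x₀‖₊ := mul_pos three_pos (nnnorm_pos.mpr hx₀)
  simpa only [mul_one, NNReal.coe_mul, NNReal.coe_ofNat, coe_nnnorm] using
    HasSparseSublevels.of_subset_image hf hlip hL (ball_subset_image_mul_exp hx₀ hρ)

lemma half_norm_le_of_mem_ball {E : Type*} [SeminormedAddCommGroup E] {x₀ x : E} {ρ : ℝ}
    (hρ : ρ ≤ 1 / 2) (hx : x ∈ Metric.ball x₀ (ρ * ‖x₀‖)) : ‖x₀‖ / 2 ≤ ‖x‖ := by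
  have := norm_sub_norm_le x₀ x
  have := mem_ball_iff_norm'.mp hx
  have : ρ * ‖x₀‖ ≤ 1 / 2 * ‖x₀‖ := by gcongr
  linarith

/-- The density of the fiber integral of `|F|^{-2c}` over `xy = t` in the coordinate `x`, where
`F` is the sum of the double series `a`. -/
noncomputable def fiberDensity (a : ℕ → ℕ → ℂ) (c : ℝ) (t x : ℂ) : ℝ≥0∞ :=
  ENNReal.ofReal ((1 + ‖t‖ ^ 2 / ‖x‖ ^ 4) * ‖doubleSeries a x (t / x)‖ ^ (-(2 * c)))

lemma fiberDensity_le (a : ℕ → ℕ → ℂ) (c : ℝ) {x₀ y₀ x : ℂ} (hx₀ : x₀ ≠ 0)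
    (hx : ‖x₀‖ / 2 ≤ ‖x‖) :
    fiberDensity a c (x₀ * y₀) x ≤ ENNReal.ofReal (16 * (1 + ‖y₀‖ ^ 2 / ‖x₀‖ ^ 2)) *
      ENNReal.ofReal (‖doubleSeries a x (x₀ * y₀ / x)‖ ^ (-(2 * c))) := by
  have : 0 < ‖x₀‖ := norm_pos_iff.mpr hx₀
  rw [fiberDensity, ← ENNReal.ofReal_mul (by positivity)]
  gcongr
  calc 1 + ‖x₀ * y₀‖ ^ 2 / ‖x‖ ^ 4 ≤ 1 + ‖x₀ * y₀‖ ^ 2 / (‖x₀‖ / 2) ^ 4 := by gcongr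
    _ = 1 + 16 * (‖y₀‖ ^ 2 / ‖x₀‖ ^ 2) := by
      rw [norm_mul]
      field_simp
      norm_num
    _ ≤ 16 * (1 + ‖y₀‖ ^ 2 / ‖x₀‖ ^ 2) := by linarith

lemma lintegral_fiberDensity_ball_le {a : ℕ → ℕ → ℂ} {c ρ J : ℝ} {x₀ y₀ : ℂ} (hx₀ : x₀ ≠ 0)
    (hρ : ρ ≤ 1 / 2)
    (hJ : ∫⁻ x in Metric.ball x₀ (ρ * ‖x₀‖),
      ENNReal.ofReal (‖doubleSeries a x (x₀ * y₀ / x)‖ ^ (-(2 * c))) ≤ ENNReal.ofReal J) :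
    ∫⁻ x in Metric.ball x₀ (ρ * ‖x₀‖), fiberDensity a c (x₀ * y₀) x ≤
      ENNReal.ofReal (16 * (1 + ‖y₀‖ ^ 2 / ‖x₀‖ ^ 2) * J) := by
  rw [ENNReal.ofReal_mul (by positivity)]
  refine (setLIntegral_mono' measurableSet_ball fun x hx =>
    fiberDensity_le a c hx₀ (half_norm_le_of_mem_ball hρ hx)).trans ?_
  rw [lintegral_const_mul' _ _ ENNReal.ofReal_ne_top]
  gcongr

lemma sq_mul_rpow_neg_le {u c₀ Λ c : ℝ} {n : ℕ} (hu : 0 ≤ u) (hc₀ : 0 < c₀) (hc : 0 ≤ c)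
    (hΛ : c₀ * u ^ n ≤ Λ) : u ^ 2 * Λ ^ (-(2 * c)) ≤ c₀ ^ (-(2 * c)) * u ^ (2 - 2 * (c * n)) := by
  rcases hu.eq_or_lt with rfl | hu
  · rw [zero_pow two_ne_zero, zero_mul]
    positivity
  · calc u ^ 2 * Λ ^ (-(2 * c)) ≤ u ^ 2 * (c₀ * u ^ n) ^ (-(2 * c)) := by
          gcongr ?_ * ?_
          exact Real.rpow_le_rpow_of_nonpos (by positivity) hΛ (by linarith)
      _ = c₀ ^ (-(2 * c)) * u ^ (2 - 2 * (c * n)) := by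
          rw [Real.mul_rpow hc₀.le (by positivity), ← Real.rpow_natCast u n, ← Real.rpow_mul hu.le,
            mul_left_comm, ← Real.rpow_natCast u 2, ← Real.rpow_add hu]
          ring_nf

variable {a : ℕ → ℕ → ℂ} {r c : ℝ} {k l : ℕ}

lemma aemeasurable_norm_doubleSeries_fiber
    (hs : Summable fun mn : ℕ × ℕ => ‖a mn.1 mn.2‖ * r ^ mn.1 * r ^ mn.2) {x₀ y₀ : ℂ}
    (hx₀ : x₀ ≠ 0) (hx : 3 * ‖x₀‖ < r) (hy : 3 * ‖y₀‖ < r) {ρ : ℝ} (hρ : ρ ≤ 1 / 2) :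
    AEMeasurable (fun x => ‖doubleSeries a x (x₀ * y₀ / x)‖)
      (volume.restrict (Metric.ball x₀ (ρ * ‖x₀‖))) := by
  have hx₀' : 0 < ‖x₀‖ := norm_pos_iff.mpr hx₀
  have hlower {x : ℂ} (hx : x ∈ Metric.ball x₀ (ρ * ‖x₀‖)) : ‖x₀‖ / 2 ≤ ‖x‖ :=
    half_norm_le_of_mem_ball hρ hx
  have hx0 {x : ℂ} (hx : x ∈ Metric.ball x₀ (ρ * ‖x₀‖)) : 0 < ‖x‖ := by linarith [hlower hx]
  have hdiff : DifferentiableOn ℂ (fun x => doubleSeries a x (x₀ * y₀ / x))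
      (Metric.ball x₀ (ρ * ‖x₀‖)) := by
    refine differentiableOn_doubleSeries_comp hs Metric.isOpen_ball differentiableOn_id
      ((differentiableOn_const _).div differentiableOn_id fun x hxb => norm_pos_iff.mp (hx0 hxb))
      (fun x hxb => ?_) fun x hxb => ?_
    · have := norm_le_norm_add_norm_sub' x x₀
      have := mem_ball_iff_norm.mp hxb
      have : ρ * ‖x₀‖ ≤ 1 / 2 * ‖x₀‖ := by gcongr
      linarith
    · rw [norm_div, norm_mul, div_le_iff₀ (hx0 hxb)]
      nlinarith [hlower hxb, norm_nonneg y₀]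
  exact (hdiff.continuousOn.norm).aemeasurable measurableSet_ball

lemma exists_pos_mul_pow_le_weightNorm
    (hs : Summable fun mn : ℕ × ℕ => ‖a mn.1 mn.2‖ * r ^ mn.1 * r ^ mn.2) (hr : 0 < r)
    (hak : a k 0 ≠ 0) (hal : a 0 l ≠ 0) :
    ∃ c₀ > 0, ∀ᶠ p : ℂ × ℂ in 𝓝 0, c₀ * ‖p.1‖ ^ k ≤ weightNorm a k l p.1 p.2 ∧
      c₀ * ‖p.2‖ ^ l ≤ weightNorm a k l p.1 p.2 := by
  obtain ⟨A, hA, hfst⟩ := (fst_pow_isBigO_weightNorm (l := l) hs hr hak).exists_pos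
  obtain ⟨B, hB, hsnd⟩ := (snd_pow_isBigO_weightNorm (k := k) hs hr hal).exists_pos
  have hbound {D u Λ : ℝ} (hDAB : D ≤ A + B) (hΛ : 0 ≤ Λ) (hu : u ≤ D * Λ) :
      1 / (A + B) * u ≤ Λ := by
    rw [one_div_mul_eq_div, div_le_iff₀' (by positivity)]
    exact hu.trans (by gcongr)
  refine ⟨1 / (A + B), by positivity, ?_⟩
  filter_upwards [hfst.bound, hsnd.bound] with p hx hy
  have hΛ := weightNorm_nonneg a k l p.1 p.2
  rw [norm_pow, Real.norm_of_nonneg hΛ] at hx hy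
  exact ⟨hbound (by linarith) hΛ hx, hbound (by linarith) hΛ hy⟩

lemma volume_ball_mul_le (x₀ : ℂ) {ρ u : ℝ} (hρ : ρ ≤ 3) (hu : 0 ≤ u) :
    volume (Metric.ball x₀ (ρ * u)) ≤ ENNReal.ofReal (Real.pi * (3 * u) ^ 2) := by
  rw [Complex.volume_ball, mul_comm Real.pi, ENNReal.ofReal_mul (sq_nonneg _),
    ENNReal.ofReal_pow (by positivity), ← NNReal.coe_real_pi, ENNReal.ofReal_coe_nnreal]
  gcongr

lemma exists_lintegral_fiberDensity_ball_le_weightNorm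
    (hs : Summable fun mn : ℕ × ℕ => ‖a mn.1 mn.2‖ * r ^ mn.1 * r ^ mn.2) (hr : 0 < r)
    (hak : a k 0 ≠ 0) (hal : a 0 l ≠ 0) (hc : 0 < c) (hck : c * k < 1) (hcl : c * l < 1) :
    ∃ ρ > 0, ∃ K > 0, ∀ᶠ p : ℂ × ℂ in 𝓝 0, p.1 ≠ 0 → 0 < weightNorm a k l p.1 p.2 →
      ∫⁻ x in Metric.ball p.1 (ρ * ‖p.1‖), fiberDensity a c (p.1 * p.2) x ≤ ENNReal.ofReal
        (K * ((‖p.1‖ ^ 2 + ‖p.2‖ ^ 2) * weightNorm a k l p.1 p.2 ^ (-(2 * c)))) := by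
  have hcN : c * ((k + l) / 2 : ℕ) < 1 := by
    have hfloor : (((k + l) / 2 : ℕ) : ℝ) ≤ (k + l) / 2 := mod_cast Nat.cast_div_le
    nlinarith
  obtain ⟨ρ, hρ, hρ4, C, hC, hsparse⟩ := exists_hasSparseSublevels_doubleSeries_orbit hs hr hak hal
  obtain ⟨K, hK, hint⟩ := exists_lintegral_rpow_neg_le_of_hasSparseSublevels hc hcN hC
  refine ⟨ρ / 2, by positivity, 144 * K, by positivity, ?_⟩
  filter_upwards [hsparse, eventually_three_mul_norm_lt hr] with ⟨x₀, y₀⟩ horbit ⟨hx, hy⟩ hx₀ hΛ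
  let Λ : ℝ := weightNorm a k l x₀ y₀
  let B : Set ℂ := Metric.ball x₀ (ρ / 2 * ‖x₀‖)
  have hx₀' : 0 < ‖x₀‖ := norm_pos_iff.mpr hx₀
  have hsparseB : HasSparseSublevels (fun x => ‖doubleSeries a x (x₀ * y₀ / x)‖) B
      ((k + l) / 2) (3 * ‖x₀‖) Λ C := by
    refine HasSparseSublevels.of_comp_mul_exp hx₀ (by linarith) ?_
    convert horbit using 4 with w
    rw [mul_div_mul_left _ _ hx₀, Complex.exp_neg, div_eq_mul_inv]
  have hintB := hint _ B (3 * ‖x₀‖) Λ (by positivity) hΛ hsparseB (fun x => norm_nonneg _)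
    (aemeasurable_norm_doubleSeries_fiber hs hx₀ hx hy (by linarith))
    (volume_ball_mul_le x₀ (by linarith) hx₀'.le)
  refine (lintegral_fiberDensity_ball_le hx₀ (by linarith) hintB).trans_eq (congrArg _ ?_)
  field_simp
  ring

theorem exists_lintegral_fiberDensity_ball_le
    (hs : Summable fun mn : ℕ × ℕ => ‖a mn.1 mn.2‖ * r ^ mn.1 * r ^ mn.2) (hr : 0 < r)
    (hak : a k 0 ≠ 0) (hal : a 0 l ≠ 0) (hc : 0 < c) (hck : c * k < 1) (hcl : c * l < 1) :
    ∃ ρ > 0, ∃ K > 0, ∀ᶠ p : ℂ × ℂ in 𝓝 0, p.1 ≠ 0 →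
      ∫⁻ x in Metric.ball p.1 (ρ * ‖p.1‖), fiberDensity a c (p.1 * p.2) x ≤
        ENNReal.ofReal (K * (‖p.1‖ ^ (2 - 2 * (c * k)) + ‖p.2‖ ^ (2 - 2 * (c * l)))) := by
  obtain ⟨ρ, hρ, K, hK, hint⟩ :=
    exists_lintegral_fiberDensity_ball_le_weightNorm hs hr hak hal hc hck hcl
  obtain ⟨c₀, hc₀, hlower⟩ := exists_pos_mul_pow_le_weightNorm hs hr hak hal
  refine ⟨ρ, hρ, K * c₀ ^ (-(2 * c)), by positivity, ?_⟩
  filter_upwards [hint, hlower] with p hp ⟨hx, hy⟩ hp0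
  have hΛ : 0 < weightNorm a k l p.1 p.2 :=
    lt_of_lt_of_le (mul_pos hc₀ (pow_pos (norm_pos_iff.mpr hp0) k)) hx
  refine (hp hp0 hΛ).trans (ENNReal.ofReal_le_ofReal ?_)
  rw [mul_assoc]
  refine mul_le_mul_of_nonneg_left ?_ hK.le
  rw [add_mul, mul_add]
  exact add_le_add (sq_mul_rpow_neg_le (norm_nonneg _) hc₀ hc.le hx)
    (sq_mul_rpow_neg_le (norm_nonneg _) hc₀ hc.le hy)

end LocalEstimate

section DyadicAnnuli

lemma exists_finset_annulus_subset_iUnion_ball (E : Type*) [NormedAddCommGroup E]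
    [NormedSpace ℝ E] [ProperSpace E] {ρ : ℝ} (hρ : 0 < ρ) :
    ∃ Z : Finset E, (∀ ζ ∈ Z, 1 / 2 ≤ ‖ζ‖ ∧ ‖ζ‖ ≤ 1) ∧ ∀ R > 0,
      {x : E | R / 2 ≤ ‖x‖ ∧ ‖x‖ ≤ R} ⊆
        ⋃ ζ : Z, Metric.ball (R • (ζ : E)) (ρ * ‖R • (ζ : E)‖) := by
  let A : Set E := {ζ | 1 / 2 ≤ ‖ζ‖} ∩ Metric.closedBall 0 1
  have hA : IsCompact A := (isCompact_closedBall 0 1).inter_left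
    (isClosed_le continuous_const continuous_norm)
  obtain ⟨Z, hZA, hZ, hcover⟩ := hA.finite_cover_balls (half_pos hρ)
  lift Z to Finset E using hZ
  refine ⟨Z, fun ζ hζ => ⟨(hZA hζ).1, mem_closedBall_zero_iff.mp (hZA hζ).2⟩, fun R hR x hx => ?_⟩
  obtain ⟨z, rfl⟩ : ∃ z, x = R • z := ⟨R⁻¹ • x, (smul_inv_smul₀ hR.ne' x).symm⟩
  simp only [Set.mem_ofPred_eq, norm_smul, Real.norm_of_nonneg hR.le] at hx
  have hzA : z ∈ A := ⟨by rw [Set.mem_ofPred_eq]; nlinarith [hx.1],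
    mem_closedBall_zero_iff.mpr ((mul_le_iff_le_one_right hR).mp hx.2)⟩
  obtain ⟨ζ, hζ, hzζ⟩ := Set.mem_iUnion₂.mp (hcover hzA)
  have hζ2 : (1 : ℝ) / 2 ≤ ‖ζ‖ := (hZA hζ).1
  refine Set.mem_iUnion.mpr ⟨⟨ζ, hζ⟩, ?_⟩
  rw [mem_ball_iff_norm] at hzζ ⊢
  rw [← smul_sub, norm_smul, norm_smul, Real.norm_of_nonneg hR.le]
  calc R * ‖z - ζ‖ < R * (ρ / 2) := by gcongr
    _ = ρ * (R * (1 / 2)) := by ring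
    _ ≤ ρ * (R * ‖ζ‖) := by gcongr

lemma sum_range_div_pow_rpow_le {q P α : ℝ} (hq : 1 < q) (hP : 0 ≤ P) (hα : 0 < α) (n : ℕ) :
    ∑ i ∈ Finset.range n, (P / q ^ i) ^ α ≤ P ^ α * (1 - q⁻¹ ^ α)⁻¹ := by
  have : 0 < q := one_pos.trans hq
  have hlt : q⁻¹ ^ α < 1 := Real.rpow_lt_one (by positivity) (inv_lt_one_of_one_lt₀ hq) hα
  have hterm (i : ℕ) : (P / q ^ i) ^ α = P ^ α * (q⁻¹ ^ α) ^ i := by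
    rw [div_eq_mul_inv, ← inv_pow, Real.mul_rpow hP (by positivity), Real.rpow_pow_comm]
    positivity
  simp only [hterm, ← Finset.mul_sum]
  gcongr
  rw [← tsum_geometric_of_lt_one (by positivity) hlt]
  exact (summable_geometric_of_lt_one (by positivity) hlt).sum_le_tsum _ fun i _ => by positivity

lemma sum_range_ite_mul_pow_rpow_le {q τ β : ℝ} (hq : 1 < q) (hτ : 0 ≤ τ) (hβ : 0 < β) (n : ℕ) :
    ∑ i ∈ Finset.range n, (if τ * q ^ i < 1 then (τ * q ^ i) ^ β else 0) ≤
      q ^ β / (q ^ β - 1) := by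
  have hq0 : 0 < q := one_pos.trans hq
  have hqβ : 0 < q ^ β - 1 := sub_pos.mpr (Real.one_lt_rpow hq hβ)
  suffices h : ∑ i ∈ Finset.range n, (if τ * q ^ i < 1 then (τ * q ^ i) ^ β else 0) ≤
      min (τ * q ^ n) q ^ β / (q ^ β - 1) by
    refine h.trans ?_
    gcongr
    exact min_le_right _ _
  induction n with
  | zero =>
    rw [Finset.sum_range_zero]
    positivity
  | succ n ih =>
    rw [Finset.sum_range_succ]
    have hu : 0 ≤ τ * q ^ n := by positivity
    split_ifs with h1
    · rw [min_eq_left (h1.le.trans hq.le)] at ih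
      rw [min_eq_left (by rw [pow_succ, ← mul_assoc]; nlinarith), pow_succ, ← mul_assoc,
        Real.mul_rpow hu hq0.le]
      calc _ ≤ _ := add_le_add_left ih _
        _ = _ := by field_simp; ring
    · rw [add_zero]
      refine ih.trans ?_
      gcongr
      · exact hq.le
      · lia

variable {g : ℂ → ℂ → ℝ≥0∞} {ρ K α β s : ℝ}

lemma setLIntegral_ball_smul_le (hK : 0 ≤ K) (hα : 0 ≤ α) (hβ : 0 ≤ β)
    (hg : ∀ x₀ y₀ : ℂ, x₀ ≠ 0 → ‖x₀‖ < s → ‖y₀‖ < s →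
      ∫⁻ x in Metric.ball x₀ (ρ * ‖x₀‖), g (x₀ * y₀) x ≤
        ENNReal.ofReal (K * (‖x₀‖ ^ α + ‖y₀‖ ^ β)))
    {t ζ : ℂ} {R : ℝ} (hR : 0 < R) (hRs : R < s) (hts : 2 * (‖t‖ / R) < s)
    (hζ2 : 1 / 2 ≤ ‖ζ‖) (hζ1 : ‖ζ‖ ≤ 1) :
    ∫⁻ x in Metric.ball (R • ζ) (ρ * ‖R • ζ‖), g t x ≤
      ENNReal.ofReal (K * (R ^ α + (2 * (‖t‖ / R)) ^ β)) := by
  have hnorm : ‖R • ζ‖ = R * ‖ζ‖ := by rw [norm_smul, Real.norm_of_nonneg hR.le]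
  have hx : ‖R • ζ‖ ≤ R := hnorm.trans_le (mul_le_of_le_one_right hR.le hζ1)
  have hx0 : R • ζ ≠ 0 := smul_ne_zero hR.ne' (norm_pos_iff.mp (by linarith))
  have hy : ‖t / (R • ζ)‖ ≤ 2 * (‖t‖ / R) := by
    rw [norm_div, hnorm]
    calc ‖t‖ / (R * ‖ζ‖) ≤ ‖t‖ / (R * (1 / 2)) := by gcongr
      _ = 2 * (‖t‖ / R) := by field_simp
  have hlocal := hg (R • ζ) (t / (R • ζ)) hx0 (hx.trans_lt hRs) (hy.trans_lt hts)
  rw [mul_div_cancel₀ _ hx0] at hlocal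
  refine hlocal.trans (ENNReal.ofReal_le_ofReal ?_)
  gcongr

lemma exists_setLIntegral_annulus_le (hρ : 0 < ρ) (hK : 0 ≤ K) (hα : 0 ≤ α) (hβ : 0 ≤ β)
    (hg : ∀ x₀ y₀ : ℂ, x₀ ≠ 0 → ‖x₀‖ < s → ‖y₀‖ < s →
      ∫⁻ x in Metric.ball x₀ (ρ * ‖x₀‖), g (x₀ * y₀) x ≤
        ENNReal.ofReal (K * (‖x₀‖ ^ α + ‖y₀‖ ^ β))) :
    ∃ C ≥ 0, ∀ (t : ℂ) (R : ℝ), 0 < R → R < s → 2 * (‖t‖ / R) < s →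
      ∫⁻ x in {x | R / 2 ≤ ‖x‖ ∧ ‖x‖ ≤ R}, g t x ≤
        ENNReal.ofReal (C * (R ^ α + (2 * (‖t‖ / R)) ^ β)) := by
  obtain ⟨Z, hZ, hcover⟩ := exists_finset_annulus_subset_iUnion_ball ℂ hρ
  refine ⟨Z.card * K, by positivity, fun t R hR hRs hts => ?_⟩
  calc ∫⁻ x in {x | R / 2 ≤ ‖x‖ ∧ ‖x‖ ≤ R}, g t x
      ≤ ∫⁻ x in ⋃ ζ : Z, Metric.ball (R • (ζ : ℂ)) (ρ * ‖R • (ζ : ℂ)‖), g t x :=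
        lintegral_mono_set (hcover R hR)
    _ ≤ ∑ ζ : Z, ∫⁻ x in Metric.ball (R • (ζ : ℂ)) (ρ * ‖R • (ζ : ℂ)‖), g t x := by
        simpa only [tsum_fintype] using lintegral_iUnion_le
          (fun ζ : Z => Metric.ball (R • (ζ : ℂ)) (ρ * ‖R • (ζ : ℂ)‖)) (g t)
    _ ≤ ∑ _ζ : Z, ENNReal.ofReal (K * (R ^ α + (2 * (‖t‖ / R)) ^ β)) :=
        Finset.sum_le_sum fun ζ _ =>
          setLIntegral_ball_smul_le hK hα hβ hg hR hRs hts (hZ ζ ζ.2).1 (hZ ζ ζ.2).2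
    _ = ENNReal.ofReal (Z.card * K * (R ^ α + (2 * (‖t‖ / R)) ^ β)) := by
        rw [Finset.sum_const, Finset.card_univ, Fintype.card_coe, nsmul_eq_mul, mul_assoc,
          ENNReal.ofReal_mul (p := (Z.card : ℝ)) (Nat.cast_nonneg _), ENNReal.ofReal_natCast]

lemma fiber_domain_subset_iUnion_annulus {P : ℝ} (hP : 0 < P) (t : ℂ) :
    {x : ℂ | ‖t‖ / P < ‖x‖ ∧ ‖x‖ < P} ⊆
      ⋃ n : ℕ, {x | ‖t‖ / P ^ 2 * 2 ^ n < 1 ∧ P / 2 ^ n / 2 ≤ ‖x‖ ∧ ‖x‖ ≤ P / 2 ^ n} := by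
  rintro x ⟨htx, hxP⟩
  have hx : 0 < ‖x‖ := lt_of_le_of_lt (by positivity) htx
  obtain ⟨n, hn_lt, hn_le⟩ := exists_nat_pow_near_of_lt_one (div_pos hx hP)
    ((div_le_one hP).mpr hxP.le) (y := (1 / 2 : ℝ)) (by norm_num) (by norm_num)
  have hupper : ‖x‖ ≤ P / 2 ^ n := by
    rwa [div_le_iff₀ hP, one_div, inv_pow, inv_mul_eq_div] at hn_le
  have hlower : P / 2 ^ n / 2 ≤ ‖x‖ := by
    rw [lt_div_iff₀ hP, one_div, inv_pow, inv_mul_eq_div, pow_succ, ← div_div] at hn_lt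
    exact hn_lt.le
  refine Set.mem_iUnion.mpr ⟨n, ?_, hlower, hupper⟩
  have ht := htx.trans_le hupper
  rw [div_lt_div_iff₀ hP (by positivity)] at ht
  rwa [div_mul_eq_mul_div, div_lt_one (by positivity), sq]

lemma exists_setLIntegral_fiber_le (hρ : 0 < ρ) (hK : 0 ≤ K) (hα : 0 < α) (hβ : 0 < β)
    (hg : ∀ x₀ y₀ : ℂ, x₀ ≠ 0 → ‖x₀‖ < s → ‖y₀‖ < s →
      ∫⁻ x in Metric.ball x₀ (ρ * ‖x₀‖), g (x₀ * y₀) x ≤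
        ENNReal.ofReal (K * (‖x₀‖ ^ α + ‖y₀‖ ^ β)))
    {P : ℝ} (hP : 0 < P) (hPs : 2 * P ≤ s) :
    ∃ M : ℝ≥0, ∀ t : ℂ, ∫⁻ x in {x | ‖t‖ / P < ‖x‖ ∧ ‖x‖ < P}, g t x ≤ M := by
  obtain ⟨C, hC, hannulus⟩ := exists_setLIntegral_annulus_le hρ hK hα.le hβ.le hg
  refine ⟨(C * (P ^ α * (1 - 2⁻¹ ^ α)⁻¹ + (2 * P) ^ β * (2 ^ β / (2 ^ β - 1)))).toNNReal,
    fun t => ?_⟩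
  let τ : ℝ := ‖t‖ / P ^ 2
  let b (n : ℕ) : ℝ :=
    C * ((P / 2 ^ n) ^ α + (2 * P) ^ β * (if τ * 2 ^ n < 1 then (τ * 2 ^ n) ^ β else 0))
  have hb (n : ℕ) : 0 ≤ b n := by positivity
  have hbound (n : ℕ) :
      ∫⁻ x in {x | τ * 2 ^ n < 1 ∧ P / 2 ^ n / 2 ≤ ‖x‖ ∧ ‖x‖ ≤ P / 2 ^ n}, g t x ≤
        ENNReal.ofReal (b n) := by
    by_cases hn : τ * 2 ^ n < 1
    · have hR : P / 2 ^ n < s :=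
        (div_le_self hP.le (one_le_pow₀ one_le_two)).trans_lt (by linarith)
      have htR : 2 * (‖t‖ / (P / 2 ^ n)) = 2 * P * (τ * 2 ^ n) := by
        simp only [τ]
        field_simp
      have hts : 2 * (‖t‖ / (P / 2 ^ n)) < s := by
        rw [htR]
        nlinarith
      simpa only [b, hn, true_and, if_true, htR,
        Real.mul_rpow (x := 2 * P) (y := τ * 2 ^ n) (by positivity) (by positivity)]
        using hannulus t (P / 2 ^ n) (by positivity) hR hts
    · simp [hn]
  refine (lintegral_mono_set (fiber_domain_subset_iUnion_annulus hP t)).trans <|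
    (lintegral_iUnion_le _ _).trans <| (ENNReal.tsum_le_tsum hbound).trans <|
    ENNReal.tsum_le_of_sum_range_le fun n => ?_
  rw [← ENNReal.ofReal_sum_of_nonneg fun i _ => hb i, ← Finset.mul_sum, Finset.sum_add_distrib,
    ← Finset.mul_sum]
  refine ENNReal.ofReal_le_ofReal ?_
  gcongr
  · exact sum_range_div_pow_rpow_le one_lt_two hP.le hα n
  · exact sum_range_ite_mul_pow_rpow_le one_lt_two (by positivity) hβ n

end DyadicAnnuli

section FiberIntegrals

open Filter Topology

variable {a : ℕ → ℕ → ℂ} {F : ℂ → ℂ → ℂ} {r c R : ℝ} {k l : ℕ}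

theorem exists_setLIntegral_fiberDensity_le
    (hs : Summable fun mn : ℕ × ℕ => ‖a mn.1 mn.2‖ * r ^ mn.1 * r ^ mn.2) (hr : 0 < r)
    (hak : a k 0 ≠ 0) (hal : a 0 l ≠ 0) (hc : 0 < c) (hck : c * k < 1) (hcl : c * l < 1) :
    ∃ P₀ > 0, ∀ P, 0 < P → P ≤ P₀ → ∃ M : ℝ≥0, ∀ t : ℂ,
      ∫⁻ x in {x | ‖t‖ / P < ‖x‖ ∧ ‖x‖ < P}, fiberDensity a c t x ≤ M := by
  obtain ⟨ρ, hρ, K, hK, hlocal⟩ := exists_lintegral_fiberDensity_ball_le hs hr hak hal hc hck hcl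
  obtain ⟨s, hs0, hball⟩ := Metric.eventually_nhds_iff.mp hlocal
  have hball' (x₀ y₀ : ℂ) (hx₀ : x₀ ≠ 0) (hx : ‖x₀‖ < s) (hy : ‖y₀‖ < s) :
      ∫⁻ x in Metric.ball x₀ (ρ * ‖x₀‖), fiberDensity a c (x₀ * y₀) x ≤
        ENNReal.ofReal (K * (‖x₀‖ ^ (2 - 2 * (c * k)) + ‖y₀‖ ^ (2 - 2 * (c * l)))) := by
    refine hball (y := (x₀, y₀)) ?_ hx₀
    rw [dist_zero_right]
    exact max_lt hx hy
  refine ⟨s / 2, half_pos hs0, fun P hP hPs => ?_⟩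
  exact exists_setLIntegral_fiber_le hρ hK.le (by linarith) (by linarith) hball' hP (by linarith)

lemma doubleSeries_swap (a : ℕ → ℕ → ℂ) (x y : ℂ) :
    doubleSeries (fun m n => a n m) y x = doubleSeries a x y := by
  unfold doubleSeries
  rw [← (Equiv.prodComm ℕ ℕ).tsum_eq]
  exact tsum_congr fun mn => mul_right_comm _ _ _

lemma fiberIntegral_le_add (hR : 0 < R)
    (hF : ∀ x y, ‖x‖ < R → ‖y‖ < R → F x y = doubleSeries a x y) (t : ℂ) :
    fiberIntegral F c R t ≤ (∫⁻ x in {x | ‖t‖ / R < ‖x‖ ∧ ‖x‖ < R}, fiberDensity a c t x) +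
      ∫⁻ y in {y | ‖t‖ / R < ‖y‖ ∧ ‖y‖ < R}, fiberDensity (fun m n => a n m) c t y := by
  have hmeas (q : ℝ) : MeasurableSet {x : ℂ | q < ‖x‖ ∧ ‖x‖ < R} :=
    measurableSet_Ioo.preimage measurable_norm
  unfold fiberIntegral
  split_ifs with ht
  · subst ht
    simp only [norm_zero, zero_div]
    refine add_le_add (setLIntegral_mono' (hmeas 0) fun x hx => ?_)
      (setLIntegral_mono' (hmeas 0) fun y hy => ?_)
    · simp [fiberDensity, hF x 0 hx.2 (by simpa using hR)]
    · simp [fiberDensity, hF 0 y (by simpa using hR) hy.2, doubleSeries_swap]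
  · refine le_add_of_le_left (setLIntegral_mono' (hmeas _) fun x ⟨htx, hxR⟩ => ?_)
    have hx : 0 < ‖x‖ := lt_of_le_of_lt (by positivity) htx
    rw [fiberDensity, hF x (t / x) hxR]
    rwa [norm_div, div_lt_comm₀ hx hR]

end FiberIntegrals

/-- Uniform upper bounds for integrals along the fibers of `π(x,y) = xy`:
if `F(·,0)` and `F(0,·)` vanish to orders exactly `k` and `l` at the origin and
`c·k < 1`, `c·l < 1`, then there exist `R ∈ (0,R₀]`, `δ > 0` and `M > 0` with
`K_t(R) ≤ M` whenever `|t| ≤ δ`. -/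
theorem uniform_bound_of_fiber_integrals
    (R₀ : ℝ) (hR₀ : 0 < R₀) (a : ℕ → ℕ → ℂ) (F : ℂ → ℂ → ℂ)
    (hconv : ∀ x y : ℂ, ‖x‖ < R₀ → ‖y‖ < R₀ →
      Summable (fun mn : ℕ × ℕ => ‖a mn.1 mn.2‖ * ‖x‖ ^ mn.1 * ‖y‖ ^ mn.2))
    (hF : ∀ x y : ℂ, ‖x‖ < R₀ → ‖y‖ < R₀ →
      F x y = ∑' mn : ℕ × ℕ, a mn.1 mn.2 * x ^ mn.1 * y ^ mn.2)
    (k l : ℕ)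
    (hak : a k 0 ≠ 0) (hkmin : ∀ m : ℕ, m < k → a m 0 = 0)
    (hal : a 0 l ≠ 0) (hlmin : ∀ n : ℕ, n < l → a 0 n = 0)
    (c : ℝ) (hc0 : 0 < c) (hck : c * k < 1) (hcl : c * l < 1) :
    ∃ R : ℝ, 0 < R ∧ R ≤ R₀ ∧ ∃ δ : ℝ, 0 < δ ∧ ∃ M : ℝ, 0 < M ∧
      ∀ t : ℂ, ‖t‖ ≤ δ → fiberIntegral F c R t ≤ ENNReal.ofReal M := by
  have hr : 0 < R₀ / 2 := half_pos hR₀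
  have hs : Summable fun mn : ℕ × ℕ => ‖a mn.1 mn.2‖ * (R₀ / 2) ^ mn.1 * (R₀ / 2) ^ mn.2 := by
    have hnorm : ‖((R₀ / 2 : ℝ) : ℂ)‖ = R₀ / 2 := Complex.norm_of_nonneg hr.le
    simpa only [hnorm] using hconv (R₀ / 2 : ℝ) (R₀ / 2 : ℝ) (by linarith) (by linarith)
  have hs' : Summable fun mn : ℕ × ℕ => ‖a mn.2 mn.1‖ * (R₀ / 2) ^ mn.1 * (R₀ / 2) ^ mn.2 :=
    (Equiv.prodComm ℕ ℕ).summable_iff.mp (hs.congr fun mn => mul_right_comm _ _ _)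
  obtain ⟨P, hP, hx⟩ := exists_setLIntegral_fiberDensity_le hs hr hak hal hc0 hck hcl
  obtain ⟨P', hP', hy⟩ :=
    exists_setLIntegral_fiberDensity_le (a := fun m n => a n m) hs' hr hal hak hc0 hcl hck
  let R : ℝ := min (min P P') R₀
  have hR : 0 < R := lt_min (lt_min hP hP') hR₀
  have hRR₀ : R ≤ R₀ := min_le_right _ _
  obtain ⟨M, hM⟩ := hx R hR ((min_le_left _ _).trans (min_le_left _ _))
  obtain ⟨M', hM'⟩ := hy R hR ((min_le_left _ _).trans (min_le_right _ _))
  refine ⟨R, hR, hRR₀, 1, one_pos, (M + M' + 1 : ℝ≥0), by positivity, fun t _ => ?_⟩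
  rw [ENNReal.ofReal_coe_nnreal, ENNReal.coe_add, ENNReal.coe_add]
  calc fiberIntegral F c R t
      ≤ _ := fiberIntegral_le_add hR
        (fun x y hx hy => hF x y (hx.trans_le hRR₀) (hy.trans_le hRR₀)) t
    _ ≤ M + M' := add_le_add (hM t) (hM' t)
    _ ≤ M + M' + 1 := le_self_add
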